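/- For every integer k ≥ 2, the first integral singular homology group of the unordered configuration space of k points in the 2-sphere is cyclic of order 2k − 2: H_1(C_k(S²); ℤ) ≅ ℤ/(2k−2)ℤ. -/

import Mathlib

open CategoryTheory

/-- The singular chain complex functor with coefficients in a commutative ring `R`:
the levelwise free `R`-module on the singular simplicial set of a space, turned into
a chain complex via the alternating face map complex. -/
noncomputable def singularChainComplexFunctor (R : Type) [CommRing R] :
    TopCat.{0} ⥤ ChainComplex (ModuleCat.{0} R) ℕ :=
  TopCat.toSSet ⋙ ((SimplicialObject.whiskering _ _).obj (ModuleCat.free R)) ⋙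
    AlgebraicTopology.alternatingFaceMapComplex _

/-- The `n`-th singular homology of a topological space, with coefficients in `R`. -/
noncomputable def SingularHomology (R : Type) [CommRing R] (n : ℕ) (X : Type)
    [TopologicalSpace X] : ModuleCat.{0} R :=
  (singularChainComplexFunctor R ⋙ HomologicalComplex.homologyFunctor _ _ n).obj (TopCat.of X)

/-- The setoid on the ordered configuration space (the space of injective tuples
`Fin k → M`) identifying tuples that differ by a permutation of the coordinates. -/
def configSetoid (M : Type) (k : ℕ) : Setoid {f : Fin k → M // Function.Injective f} where
  r f g := ∃ σ : Equiv.Perm (Fin k), (f : Fin k → M) ∘ σ = g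
  iseqv := by
    constructor
    · exact fun f => ⟨Equiv.refl _, rfl⟩
    · rintro f g ⟨σ, h⟩
      exact ⟨σ.symm, by rw [← h]; ext x; simp⟩
    · rintro f g h ⟨σ, hσ⟩ ⟨τ, hτ⟩
      exact ⟨τ.trans σ, by rw [← hτ, ← hσ]; rfl⟩

/-- The unordered configuration space `C_k(M)` of `k` points in `M`: the quotient of
the space of injective tuples `Fin k → M` (with the subspace topology from the product
topology) by the permutation action of the symmetric group, with the quotient topology. -/
def UnordConfigSpace (M : Type) (k : ℕ) : Type := Quotient (configSetoid M k)

instance (M : Type) [TopologicalSpace M] (k : ℕ) : TopologicalSpace (UnordConfigSpace M k) :=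
  instTopologicalSpaceQuotient

/-!
A singular `1`-cocycle on `X` is a function on paths which is additive over triangles. The group
`H_1(X; ℤ)` is cyclic of order `n` as soon as there is a loop `a` in `X` such that every cocycle
`c` satisfies `n • c a = 0`, every cocycle vanishing on `a` is a coboundary, and some cocycle takes
a value of order exactly `n` on `a`. For the configuration space of `k` points in the sphere, `a`
is the half-twist exchanging two adjacent points and `n = 2k - 2`.

* A cocycle vanishing on the half-twist is a coboundary. All half-twists in `ℂ` are freely
  homotopic, and `C_k(ℂ)` is covered by the contractible open sets of configurations on which a
  given linear functional is injective. The potentials on two such sets differ by the same constant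
  on all components of the overlap, since passing from one component to the next costs a
  half-twist, so they glue. For the sphere, one glues once more along the charts `S² ∖ {pt}`.
* `(2k - 2) • c a = 0`. By the previous item, a cocycle on `C_k(ℂ)` is, up to a coboundary, a
  multiple of the winding number of the discriminant. Hence the loop in which one point encircles
  the `k - 1` others counts as `2k - 2` half-twists, and on the sphere this loop contracts through
  the point at infinity.
* Some cocycle has order `2k - 2` on `a`. A configuration in `S² = ℂP¹` is the zero set of a
  binary form of degree `k`, unique up to a scalar, and the discriminant is homogeneous of degree
  `2k - 2` in the form. Normalizing the discriminant leaves an indeterminacy of a `(2k - 2)`-th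
  root of unity. The resulting map to a quotient of the nonzero forms by the roots of unity pulls
  back a covering along which the half-twist has monodromy a primitive root.
-/

open unitInterval Topology

/-! ### Path cocycles -/

/-- The bottom edge of the unit square. -/
def squareBottom : C(I, I × I) := .prodMk (.id I) (.const I 0)

/-- The right edge of the unit square. -/
def squareRight : C(I, I × I) := .prodMk (.const I 1) (.id I)

/-- The diagonal of the unit square. -/
def squareDiagonal : C(I, I × I) := .prodMk (.id I) (.id I)

/-- A singular `1`-cocycle on `X` with values in `A`: a function on the paths of `X`, additive along
the boundary of a triangle. The triangles are the lower halves `{(s, t) | t ≤ s}` of singular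
squares, which loses nothing because the square retracts onto its lower half. -/
structure PathCocycle (X A : Type*) [TopologicalSpace X] [AddCommGroup A] where
  /-- The value of the cocycle on a path. -/
  toFun : C(I, X) → A
  map_triangle : ∀ h : C(I × I, X), toFun (h.comp squareBottom) + toFun (h.comp squareRight) =
    toFun (h.comp squareDiagonal)

namespace PathCocycle

variable {X Y A B : Type*} [TopologicalSpace X] [TopologicalSpace Y] [AddCommGroup A]
  [AddCommGroup B]

instance : CoeFun (PathCocycle X A) fun _ => C(I, X) → A := ⟨toFun⟩

/-- The pullback of a cocycle along a continuous map. -/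
def comap (c : PathCocycle Y A) (g : C(X, Y)) : PathCocycle X A where
  toFun γ := c (g.comp γ)
  map_triangle h := c.map_triangle (g.comp h)

lemma comap_apply (c : PathCocycle Y A) (g : C(X, Y)) (γ : C(I, X)) :
    c.comap g γ = c (g.comp γ) := rfl

/-- The image of a cocycle under a homomorphism of coefficients. -/
def mapCoeff (g : A →+ B) (c : PathCocycle X A) : PathCocycle X B where
  toFun γ := g (c γ)
  map_triangle h := by rw [← map_add, c.map_triangle]

/-- The cocycle `c - w • a`, where `w` is an integral cocycle. -/
def subSMul (c : PathCocycle X A) (w : PathCocycle X ℤ) (a : A) : PathCocycle X A where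
  toFun γ := c γ - w γ • a
  map_triangle h := by
    rw [← c.map_triangle h, ← w.map_triangle h, add_smul]
    abel

variable (c : PathCocycle X A)

lemma map_const (x : X) : c (.const I x) = 0 := by
  simpa using c.map_triangle (.const _ x)

lemma map_homotopy {γ₀ γ₁ : C(I, X)} (F : γ₀.Homotopy γ₁) :
    c (F.evalAt 0) + c γ₁ = c γ₀ + c (F.evalAt 1) := by
  have lower := c.map_triangle F.toContinuousMap
  have upper := c.map_triangle (F.toContinuousMap.comp ContinuousMap.prodSwap)
  have left : (F.toContinuousMap.comp ContinuousMap.prodSwap).comp squareBottom = γ₀ :=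
    ContinuousMap.ext F.map_zero_left
  have right : F.toContinuousMap.comp squareRight = γ₁ := ContinuousMap.ext F.map_one_left
  rw [right] at lower
  rw [left] at upper
  exact lower.trans upper.symm

lemma eq_of_freeHomotopy {γ₀ γ₁ : C(I, X)} (F : γ₀.Homotopy γ₁) (hF : ∀ s, F (s, 0) = F (s, 1)) :
    c γ₀ = c γ₁ := by
  have ends : (F.evalAt 0 : C(I, X)) = F.evalAt 1 := by
    ext s; exact hF s
  have := c.map_homotopy F
  rw [ends, add_comm] at this
  exact (add_right_cancel this).symm

/-- On paths inside `U`, the cocycle is the increment of `f`. -/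
def IsPotentialOn (U : Set X) (f : X → A) : Prop :=
  ∀ γ : C(I, X), (∀ t, γ t ∈ U) → c γ = f (γ 1) - f (γ 0)

theorem exists_potential_of_starConvex {E : Type*} [AddCommGroup E] [Module ℝ E]
    [TopologicalSpace E] [IsTopologicalAddGroup E] [ContinuousSMul ℝ E] {S : Set E} {x₀ : E}
    (hx₀ : x₀ ∈ S) (hS : StarConvex ℝ x₀ S) (c : PathCocycle S A) :
    ∃ f : S → A, c.IsPotentialOn Set.univ f := by
  have mem (x : S) (s : I) : (1 - (s : ℝ)) • x₀ + (s : ℝ) • (x : E) ∈ S :=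
    hS x.2 (sub_nonneg.2 s.2.2) s.2.1 (by ring)
  let segment (x : S) : C(I, S) := ⟨fun s => ⟨_, mem x s⟩, by fun_prop⟩
  refine ⟨fun x => c (segment x), fun γ _ => ?_⟩
  let F : (ContinuousMap.const I ⟨x₀, hx₀⟩).Homotopy γ :=
    { toFun p := ⟨_, mem (γ p.2) p.1⟩
      map_zero_left t := by simp
      map_one_left t := by simp }
  have := c.map_homotopy F
  rw [map_const, zero_add] at this
  exact eq_sub_of_add_eq' this

lemma exists_increment_along_path (γ : C(I, X)) :
    ∃ F : I → A, ∀ δ : C(I, I), c (γ.comp δ) = F (δ 1) - F (δ 0) := by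
  obtain ⟨F, hF⟩ := exists_potential_of_starConvex (S := Set.Icc (0 : ℝ) 1)
    (Set.left_mem_Icc.2 zero_le_one) ((convex_Icc 0 1).starConvex (Set.left_mem_Icc.2 zero_le_one))
    (c.comap γ)
  exact ⟨F, fun δ => hF δ fun _ => trivial⟩

lemma map_comp_symm (γ : C(I, X)) : c (γ.comp ⟨unitInterval.symm, by fun_prop⟩) = -c γ := by
  obtain ⟨F, hF⟩ := c.exists_increment_along_path γ
  have forward := hF (.id I)
  have backward := hF ⟨unitInterval.symm, by fun_prop⟩
  simp only [ContinuousMap.comp_id, ContinuousMap.id_apply, ContinuousMap.coe_mk,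
    unitInterval.symm_one, unitInterval.symm_zero] at forward backward
  rw [forward, backward, neg_sub]

lemma map_eq_add_of_isPotentialOn {U V : Set X} {f g : X → A} (hf : c.IsPotentialOn U f)
    (hg : c.IsPotentialOn V g) (γ : C(I, X)) (m : I) (hU : ∀ t ≤ m, γ t ∈ U)
    (hV : ∀ t ≥ m, γ t ∈ V) : c γ = (f (γ m) - f (γ 0)) + (g (γ 1) - g (γ m)) := by
  obtain ⟨F, hF⟩ := c.exists_increment_along_path γ
  let fst : C(I, I) := ⟨Set.Icc.convexComb 0 m, by fun_prop⟩
  let snd : C(I, I) := ⟨Set.Icc.convexComb m 1, by fun_prop⟩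
  have fst_le (t : I) : fst t ≤ m := Set.Icc.convexComb_le m.2.1 t
  have le_snd (t : I) : m ≤ snd t := Set.Icc.le_convexComb m.2.2 t
  have whole := hF (.id I)
  have first := (hF fst).symm.trans (hf (γ.comp fst) fun t => hU _ (fst_le t))
  have second := (hF snd).symm.trans (hg (γ.comp snd) fun t => hV _ (le_snd t))
  simp only [fst, snd, ContinuousMap.comp_apply, ContinuousMap.coe_mk, ContinuousMap.comp_id,
    ContinuousMap.id_apply, Set.Icc.convexComb_zero, Set.Icc.convexComb_one]
    at whole first second
  rw [whole, ← first, ← second]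
  abel

theorem isPotentialOn_univ_of_local {f : X → A}
    (h : ∀ x, ∃ U : Set X, IsOpen U ∧ x ∈ U ∧ c.IsPotentialOn U f) :
    c.IsPotentialOn Set.univ f := by
  intro γ _
  obtain ⟨F, hF⟩ := c.exists_increment_along_path γ
  have locally_const : IsLocallyConstant fun t => F t - f (γ t) := by
    rw [IsLocallyConstant.iff_eventually_eq]
    intro t
    obtain ⟨U, hU, htU, hfU⟩ := h (γ t)
    obtain ⟨l, r, ht, hmem, hlr⟩ :=
      exists_Icc_mem_subset_of_mem_nhds ((hU.preimage γ.continuous).mem_nhds htU)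
    filter_upwards [hmem] with t' ht'
    let p : C(I, I) := ⟨Set.Icc.convexComb t t', by fun_prop⟩
    have hp (s : I) : γ (p s) ∈ U := hlr <| Set.ordConnected_Icc.uIcc_subset ht ht' <|
      Path.range_subpathAux t t' ▸ Set.mem_range_self s
    have hFp := (hF p).symm.trans (hfU (γ.comp p) hp)
    simp only [p, ContinuousMap.comp_apply, ContinuousMap.coe_mk, Set.Icc.convexComb_zero,
      Set.Icc.convexComb_one] at hFp
    exact sub_eq_sub_iff_sub_eq_sub.1 hFp
  have key := locally_const.apply_eq_of_isPreconnected isPreconnected_univ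
    (Set.mem_univ (0 : I)) (Set.mem_univ 1)
  calc c γ = F 1 - F 0 := hF (.id I)
    _ = f (γ 1) - f (γ 0) := by grind

theorem exists_potential_of_openCover {ι : Type*} [Nonempty ι] {U : ι → Set X} {f : ι → X → A}
    (hU : ∀ i, IsOpen (U i)) (hcover : ∀ x, ∃ i, x ∈ U i) (hf : ∀ i, c.IsPotentialOn (U i) (f i))
    (hconst : ∀ i j, ∀ x ∈ U i ∩ U j, ∀ y ∈ U i ∩ U j, f i x - f j x = f i y - f j y)
    (hinter : ∀ i j l, (U i ∩ U j ∩ U l).Nonempty) : ∃ g, c.IsPotentialOn Set.univ g := by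
  obtain ⟨o⟩ := ‹Nonempty ι›
  choose index hindex using hcover
  choose p hp using fun i => hinter i o o
  let shift (i : ι) : A := f i (p i) - f o (p i)
  have agree (i j : ι) (x : X) (hi : x ∈ U i) (hj : x ∈ U j) :
      f i x - shift i = f j x - shift j := by
    obtain ⟨y, ⟨hyi, hyj⟩, hyo⟩ := hinter i j o
    have hij := hconst i j x ⟨hi, hj⟩ y ⟨hyi, hyj⟩
    have hio : shift i = f i y - f o y := hconst i o (p i) (hp i).1 y ⟨hyi, hyo⟩
    have hjo : shift j = f j y - f o y := hconst j o (p j) (hp j).1 y ⟨hyj, hyo⟩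
    rw [hio, hjo, sub_sub_eq_add_sub, sub_sub_eq_add_sub, sub_eq_sub_iff_sub_eq_sub]
    grind
  refine ⟨fun x => f (index x) x - shift (index x),
    c.isPotentialOn_univ_of_local fun x => ⟨U (index x), hU _, hindex x, fun γ hγ => ?_⟩⟩
  beta_reduce
  rw [hf (index x) γ hγ, agree _ (index x) (γ 1) (hindex _) (hγ 1),
    agree _ (index x) (γ 0) (hindex _) (hγ 0), sub_sub_sub_cancel_right]

theorem exists_potential_range_of_isEmbedding {e : C(Y, X)} (he : IsEmbedding e)
    (h : ∃ f, (c.comap e).IsPotentialOn Set.univ f) : ∃ f, c.IsPotentialOn (Set.range e) f := by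
  obtain ⟨f, hf⟩ := h
  refine ⟨Function.extend e f 0, fun γ hγ => ?_⟩
  choose lift hlift using hγ
  let δ : C(I, Y) := ⟨lift, he.continuous_iff.2 (by simpa only [Function.comp_def, hlift]
    using γ.continuous)⟩
  have heδ : e.comp δ = γ := ContinuousMap.ext hlift
  have hδ := hf δ fun _ => trivial
  rw [comap_apply, heδ] at hδ
  rw [hδ, ← hlift 0, ← hlift 1, he.injective.extend_apply, he.injective.extend_apply]
  rfl

end PathCocycle

/-! ### Singular chains of degree at most two -/

section SingularChains

open Simplicial

/-- The singular `n`-simplices of `X`. -/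
abbrev SingularSimplex (X : Type) [TopologicalSpace X] (n : ℕ) : Type :=
  TopCat.toSSet.obj (TopCat.of X) _⦋n⦌

variable {X : Type} [TopologicalSpace X]

namespace SingularSimplex

/-- The `i`-th face of a singular simplex. -/
noncomputable abbrev face {n : ℕ} (i : Fin (n + 2)) (τ : SingularSimplex X (n + 1)) :
    SingularSimplex X n :=
  (TopCat.toSSet.obj (TopCat.of X)).δ i τ

/-- A singular simplex as a map defined on the standard simplex. -/
noncomputable def toContinuousMap {n : ℕ} :
    SingularSimplex X n ≃ C(stdSimplex ℝ (Fin (n + 1)), X) :=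
  TopCat.toSSetObjEquiv (TopCat.of X) (Opposite.op ⦋n⦌)

lemma toContinuousMap_face {n : ℕ} (i : Fin (n + 2)) (τ : SingularSimplex X (n + 1))
    (x : stdSimplex ℝ (Fin (n + 1))) :
    toContinuousMap (face i τ) x = toContinuousMap τ (stdSimplex.map i.succAbove x) := rfl

/-- A singular `0`-simplex as a point. -/
noncomputable def toPoint : SingularSimplex X 0 ≃ X := TopCat.toSSetObj₀Equiv

/-- A singular `1`-simplex as a path, running from the zeroth vertex to the first one. -/
noncomputable def toPath : SingularSimplex X 1 ≃ C(I, X) :=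
  toContinuousMap.trans (stdSimplexHomeomorphUnitInterval.arrowCongr (.refl X)).toEquiv

lemma toPath_apply (τ : SingularSimplex X 1) (t : I) :
    toPath τ t = toContinuousMap τ (stdSimplexHomeomorphUnitInterval.symm t) := rfl

lemma toPoint_face_zero (τ : SingularSimplex X 1) : toPoint (face 0 τ) = toPath τ 1 :=
  (TopCat.toSSetObj₁Equiv_apply_one τ).symm

lemma toPoint_face_one (τ : SingularSimplex X 1) : toPoint (face 1 τ) = toPath τ 0 :=
  (TopCat.toSSetObj₁Equiv_apply_zero τ).symm

end SingularSimplex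

lemma stdSimplex_map_apply {m n : ℕ} (f : Fin m → Fin n)
    (x : stdSimplex ℝ (Fin m)) (i : Fin n) :
    stdSimplex.map f x i = ∑ j, if f j = i then x j else 0 := by
  rw [stdSimplex.map_coe, FunOnFinite.linearMap_apply_apply, Finset.sum_filter]

lemma stdSimplexHomeomorphUnitInterval_symm_apply_one (t : I) :
    stdSimplexHomeomorphUnitInterval.symm t 1 = t := rfl

/-- The affine embedding of the standard triangle into the unit square with vertices `(0, 0)`,
`(1, 0)` and `(1, 1)`. -/
noncomputable def triangleToSquare : C(stdSimplex ℝ (Fin 3), I × I) where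
  toFun x := (⟨x 1 + x 2, by
      have := stdSimplex.sum_eq_one x
      rw [Fin.sum_univ_three] at this
      constructor <;>
        linarith [stdSimplex.zero_le x 0, stdSimplex.zero_le x 1, stdSimplex.zero_le x 2]⟩,
    ⟨x 2, stdSimplex.zero_le x 2, stdSimplex.le_one x 2⟩)
  continuous_toFun := by
    have hc (i : Fin 3) : Continuous fun x : stdSimplex ℝ (Fin 3) => x i :=
      (continuous_apply i).comp continuous_subtype_val
    exact .prodMk (.subtype_mk ((hc 1).add (hc 2)) _) (.subtype_mk (hc 2) _)

/-- A retraction of the unit square onto its lower half. -/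
noncomputable def squareToTriangle : C(I × I, stdSimplex ℝ (Fin 3)) where
  toFun p := ⟨![1 - (p.1 : ℝ), p.1 - min (p.1 : ℝ) p.2, min (p.1 : ℝ) p.2], by
    refine ⟨fun i => ?_, by simp [Fin.sum_univ_three]⟩
    fin_cases i
    · simpa using p.1.2.2
    · simp
    · simpa using ⟨p.1.2.1, p.2.2.1⟩⟩
  continuous_toFun := by
    refine .subtype_mk (continuous_pi fun i => ?_) _
    fin_cases i
    · change Continuous fun p : I × I => 1 - (p.1 : ℝ); fun_prop
    · change Continuous fun p : I × I => (p.1 : ℝ) - min (p.1 : ℝ) p.2; fun_prop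
    · change Continuous fun p : I × I => min (p.1 : ℝ) p.2; fun_prop

lemma squareToTriangle_triangleToSquare (x : stdSimplex ℝ (Fin 3)) :
    squareToTriangle (triangleToSquare x) = x := by
  have hsum := stdSimplex.sum_eq_one x
  rw [Fin.sum_univ_three] at hsum
  have hmin : min (x 1 + x 2) (x 2) = x 2 :=
    min_eq_right (le_add_of_nonneg_left (stdSimplex.zero_le x 1))
  ext i
  fin_cases i
  · change 1 - (x 1 + x 2) = x 0; linarith
  · change x 1 + x 2 - min (x 1 + x 2) (x 2) = x 1; rw [hmin]; ring
  · exact hmin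

namespace SingularSimplex

/-- The singular triangle formed by the lower half of a singular square. -/
noncomputable def ofSquare (h : C(I × I, X)) : SingularSimplex X 2 :=
  toContinuousMap.symm (h.comp triangleToSquare)

lemma ofSquare_surjective : Function.Surjective (ofSquare (X := X)) := fun τ =>
  ⟨(toContinuousMap τ).comp squareToTriangle, toContinuousMap.injective <| by
    ext x; simp [ofSquare, squareToTriangle_triangleToSquare]⟩

lemma toPath_face_ofSquare (i : Fin 3) (h : C(I × I, X)) (t : I) :
    toPath (face i (ofSquare h)) t = h (triangleToSquare
      (stdSimplex.map i.succAbove (stdSimplexHomeomorphUnitInterval.symm t))) := by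
  rw [toPath_apply, toContinuousMap_face, ofSquare, Equiv.apply_symm_apply]
  rfl

lemma toPath_face_zero_ofSquare (h : C(I × I, X)) :
    toPath (face 0 (ofSquare h)) = h.comp squareRight := by
  ext t
  rw [toPath_face_ofSquare]
  refine congrArg h (Prod.ext (Subtype.ext ?_) (Subtype.ext ?_))
  · simpa [triangleToSquare, squareRight, stdSimplex_map_apply] using stdSimplex.add_eq_one _
  · simp [triangleToSquare, squareRight, stdSimplex_map_apply,
      stdSimplexHomeomorphUnitInterval_symm_apply_one]

lemma toPath_face_one_ofSquare (h : C(I × I, X)) :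
    toPath (face 1 (ofSquare h)) = h.comp squareDiagonal := by
  ext t
  rw [toPath_face_ofSquare]
  refine congrArg h (Prod.ext (Subtype.ext ?_) (Subtype.ext ?_)) <;>
    simp [triangleToSquare, squareDiagonal, stdSimplex_map_apply, Fin.succAbove,
      stdSimplexHomeomorphUnitInterval_symm_apply_one]

lemma toPath_face_two_ofSquare (h : C(I × I, X)) :
    toPath (face 2 (ofSquare h)) = h.comp squareBottom := by
  ext t
  rw [toPath_face_ofSquare]
  refine congrArg h (Prod.ext (Subtype.ext ?_) (Subtype.ext ?_)) <;>
    simp [triangleToSquare, squareBottom, stdSimplex_map_apply, Fin.succAbove,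
      stdSimplexHomeomorphUnitInterval_symm_apply_one]

end SingularSimplex

/-- The boundary homomorphism of the singular chain complex, on formal sums of simplices. -/
noncomputable def singularBoundary (X : Type) [TopologicalSpace X] (n : ℕ) :
    (SingularSimplex X (n + 1) →₀ ℤ) →+ (SingularSimplex X n →₀ ℤ) :=
  (((singularChainComplexFunctor ℤ).obj (TopCat.of X)).d (n + 1) n).hom.toAddMonoidHom

open SingularSimplex

lemma singularBoundary_single {n : ℕ} (τ : SingularSimplex X (n + 1)) :
    singularBoundary X n (.single τ 1) =
      ∑ i : Fin (n + 2), (-1 : ℤ) ^ (i : ℕ) • .single (face i τ) 1 := by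
  let M := ((SimplicialObject.whiskering _ _).obj (ModuleCat.free ℤ)).obj
    (TopCat.toSSet.obj (TopCat.of X))
  have alternating_sum (x : M _⦋n + 1⦌) :
      ((AlgebraicTopology.AlternatingFaceMapComplex.obj M).d (n + 1) n).hom x =
        ∑ i : Fin (n + 2), (-1 : ℤ) ^ (i : ℕ) • (M.δ i).hom x := by
    refine (congrArg (·.hom x) (AlgebraicTopology.AlternatingFaceMapComplex.obj_d_eq M n)).trans ?_
    rw [ModuleCat.hom_sum, LinearMap.sum_apply]
    rfl
  refine (alternating_sum _).trans (Finset.sum_congr rfl fun i _ => ?_)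
  exact congrArg ((-1 : ℤ) ^ (i : ℕ) • ·)
    (Finsupp.mapDomain_single (f := face i) (a := τ) (b := (1 : ℤ)))

/-- A path as a singular chain. -/
noncomputable def pathChain (γ : C(I, X)) : SingularSimplex X 1 →₀ ℤ := .single (toPath.symm γ) 1

lemma singularBoundary_pathChain (γ : C(I, X)) : singularBoundary X 0 (pathChain γ) =
    .single (toPoint.symm (γ 1)) 1 - .single (toPoint.symm (γ 0)) 1 := by
  have target : face 0 (toPath.symm γ) = toPoint.symm (γ 1) := by
    rw [Equiv.eq_symm_apply, toPoint_face_zero, Equiv.apply_symm_apply]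
  have source : face 1 (toPath.symm γ) = toPoint.symm (γ 0) := by
    rw [Equiv.eq_symm_apply, toPoint_face_one, Equiv.apply_symm_apply]
  rw [pathChain, singularBoundary_single, Fin.sum_univ_two, target, source]
  simp [sub_eq_add_neg]

lemma singularBoundary_ofSquare (h : C(I × I, X)) :
    singularBoundary X 1 (.single (ofSquare h) 1) = pathChain (h.comp squareRight) -
      pathChain (h.comp squareDiagonal) + pathChain (h.comp squareBottom) := by
  rw [singularBoundary_single, Fin.sum_univ_three, ← toPath_face_zero_ofSquare,
    ← toPath_face_one_ofSquare, ← toPath_face_two_ofSquare]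
  simp [pathChain, sub_eq_add_neg]

namespace PathCocycle

/-- The tautological cocycle with values in `1`-chains modulo boundaries. -/
noncomputable def universal (X : Type) [TopologicalSpace X] :
    PathCocycle X ((SingularSimplex X 1 →₀ ℤ) ⧸ (singularBoundary X 1).range) where
  toFun γ := QuotientAddGroup.mk' _ (pathChain γ)
  map_triangle h := by
    rw [← map_add, ← sub_eq_zero, ← map_sub, ← AddMonoidHom.mem_ker, QuotientAddGroup.ker_mk']
    refine ⟨.single (ofSquare h) 1, ?_⟩
    rw [singularBoundary_ofSquare]
    abel

/-- The evaluation of a cocycle on singular chains. -/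
noncomputable def evalChain {A : Type*} [AddCommGroup A] (c : PathCocycle X A) :
    (SingularSimplex X 1 →₀ ℤ) →+ A :=
  Finsupp.liftAddHom fun τ => zmultiplesHom A (c (toPath τ))

variable {A : Type*} [AddCommGroup A]

lemma evalChain_pathChain (c : PathCocycle X A) (γ : C(I, X)) :
    c.evalChain (pathChain γ) = c γ := by
  simp [evalChain, pathChain]

lemma evalChain_singularBoundary (c : PathCocycle X A) (z : SingularSimplex X 2 →₀ ℤ) :
    c.evalChain (singularBoundary X 1 z) = 0 := by
  suffices h : c.evalChain.comp (singularBoundary X 1) = 0 from DFunLike.congr_fun h z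
  ext τ
  obtain ⟨h, rfl⟩ := ofSquare_surjective τ
  simp only [AddMonoidHom.comp_apply, Finsupp.singleAddHom_apply]
  rw [singularBoundary_ofSquare, map_add, map_sub, evalChain_pathChain, evalChain_pathChain,
    evalChain_pathChain, ← c.map_triangle]
  simp

lemma evalChain_eq_of_isPotentialOn {c : PathCocycle X A} {f : X → A}
    (hf : c.IsPotentialOn Set.univ f) (x : SingularSimplex X 1 →₀ ℤ) :
    c.evalChain x =
      Finsupp.liftAddHom (fun τ => zmultiplesHom A (f (toPoint τ))) (singularBoundary X 0 x) := by
  suffices h : c.evalChain = (Finsupp.liftAddHom fun τ => zmultiplesHom A (f (toPoint τ))).comp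
      (singularBoundary X 0) from DFunLike.congr_fun h x
  ext τ
  obtain ⟨γ, rfl⟩ := toPath.symm.surjective τ
  change c.evalChain (pathChain γ) = Finsupp.liftAddHom _ (singularBoundary X 0 (pathChain γ))
  rw [evalChain_pathChain, singularBoundary_pathChain, hf γ fun _ => trivial, map_sub]
  simp

lemma evalChain_mapCoeff {B : Type*} [AddCommGroup B] (g : A →+ B) (c : PathCocycle X A)
    (x : SingularSimplex X 1 →₀ ℤ) : (c.mapCoeff g).evalChain x = g (c.evalChain x) := by
  suffices h : (c.mapCoeff g).evalChain = g.comp c.evalChain from DFunLike.congr_fun h x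
  ext τ
  simp [evalChain, mapCoeff]

lemma evalChain_universal (x : SingularSimplex X 1 →₀ ℤ) :
    (universal X).evalChain x = QuotientAddGroup.mk' _ x := by
  suffices h : (universal X).evalChain = QuotientAddGroup.mk' _ from DFunLike.congr_fun h x
  ext τ
  simp [evalChain, universal, pathChain]

lemma mem_range_singularBoundary_iff (x : SingularSimplex X 1 →₀ ℤ) :
    x ∈ (singularBoundary X 1).range ↔ (universal X).evalChain x = 0 := by
  rw [evalChain_universal, ← AddMonoidHom.mem_ker, QuotientAddGroup.ker_mk']

end PathCocycle

end SingularChains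

/-! ### Computing the first homology from cocycles -/

lemma exists_surjective_ker_to_homology {R : Type*} [CommRing R] (S : ShortComplex (ModuleCat R)) :
    ∃ q : LinearMap.ker S.g.hom →ₗ[R] S.homology, Function.Surjective q ∧
      ∀ x, q x = 0 ↔ ∃ z, S.f.hom z = x := by
  let e := S.moduleCatHomologyIso.toLinearEquiv.symm
  refine ⟨e.toLinearMap ∘ₗ (LinearMap.range S.moduleCatToCycles).mkQ,
    e.surjective.comp (Submodule.mkQ_surjective _), fun x => ?_⟩
  refine (LinearEquiv.map_eq_zero_iff e).trans <|
    (Submodule.Quotient.mk_eq_zero (LinearMap.range S.moduleCatToCycles)).trans ?_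
  exact exists_congr fun z => Subtype.ext_iff

lemma nonempty_linearEquiv_zmod {H : Type*} [AddCommGroup H] [Module ℤ H] {a : H}
    (ha : ∀ x, x ∈ AddSubgroup.zmultiples a) : Nonempty (H ≃ₗ[ℤ] ZMod (addOrderOf a)) := by
  rw [addOrderOf_eq_card_of_forall_mem_zmultiples ha]
  let e := (zmodAddCyclicAddEquiv (G := H) ⟨a, ha⟩).symm
  exact ⟨e.toLinearEquiv fun m x => by simpa using map_intCast_smul e ℤ ℤ m x⟩

section

variable {X : Type} [TopologicalSpace X] {a : C(I, X)}

open PathCocycle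

lemma singularBoundary_pathChain_of_loop (ha : a 0 = a 1) :
    singularBoundary X 0 (pathChain a) = 0 := by
  rw [singularBoundary_pathChain, ha, sub_self]

lemma evalChain_mem_zmultiples {A : Type} [AddCommGroup A]
    (hgen : ∀ (B : Type) [AddCommGroup B] (c : PathCocycle X B), c a = 0 →
      ∃ f, c.IsPotentialOn Set.univ f)
    (c : PathCocycle X A) {x : SingularSimplex X 1 →₀ ℤ} (hx : singularBoundary X 0 x = 0) :
    c.evalChain x ∈ AddSubgroup.zmultiples (c a) := by
  let q : A →+ A ⧸ AddSubgroup.zmultiples (c a) := QuotientAddGroup.mk' _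
  have hca : c.mapCoeff q a = 0 :=
    (QuotientAddGroup.eq_zero_iff _).2 (AddSubgroup.mem_zmultiples _)
  obtain ⟨f, hf⟩ := hgen _ _ hca
  have hcx : (c.mapCoeff q).evalChain x = 0 := by
    rw [evalChain_eq_of_isPotentialOn hf, hx, map_zero]
  rw [evalChain_mapCoeff] at hcx
  exact (QuotientAddGroup.eq_zero_iff _).1 hcx

lemma exists_sub_zsmul_pathChain_mem_range_singularBoundary
    (hgen : ∀ (A : Type) [AddCommGroup A] (c : PathCocycle X A), c a = 0 →
      ∃ f, c.IsPotentialOn Set.univ f)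
    {x : SingularSimplex X 1 →₀ ℤ} (hx : singularBoundary X 0 x = 0) :
    ∃ m : ℤ, x - m • pathChain a ∈ (singularBoundary X 1).range := by
  obtain ⟨m, hm⟩ := evalChain_mem_zmultiples hgen (universal X) hx
  refine ⟨m, ?_⟩
  rw [mem_range_singularBoundary_iff, map_sub, map_zsmul, evalChain_pathChain]
  exact sub_eq_zero.2 hm.symm

lemma zsmul_pathChain_mem_range_singularBoundary_iff {n : ℕ}
    (hrel : ∀ (A : Type) [AddCommGroup A] (c : PathCocycle X A), n • c a = 0)
    {A : Type*} [AddCommGroup A] {ψ : PathCocycle X A} (hψ : addOrderOf (ψ a) = n) (m : ℤ) :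
    m • pathChain a ∈ (singularBoundary X 1).range ↔ (n : ℤ) ∣ m := by
  constructor
  · rintro ⟨z, hz⟩
    have h := ψ.evalChain_singularBoundary z
    rw [hz, map_zsmul, evalChain_pathChain] at h
    exact hψ ▸ addOrderOf_dvd_iff_zsmul_eq_zero.2 h
  · rintro ⟨j, rfl⟩
    rw [mem_range_singularBoundary_iff, map_zsmul, evalChain_pathChain, mul_comm, mul_zsmul,
      natCast_zsmul, hrel, zsmul_zero]

theorem nonempty_singularHomology_one_linearEquiv_zmod {n : ℕ} (ha : a 0 = a 1)
    (hrel : ∀ (A : Type) [AddCommGroup A] (c : PathCocycle X A), n • c a = 0)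
    (hgen : ∀ (A : Type) [AddCommGroup A] (c : PathCocycle X A), c a = 0 →
      ∃ f, c.IsPotentialOn Set.univ f)
    {A : Type*} [AddCommGroup A] {ψ : PathCocycle X A} (hψ : addOrderOf (ψ a) = n) :
    Nonempty (SingularHomology ℤ 1 X ≃ₗ[ℤ] ZMod n) := by
  let K := (singularChainComplexFunctor ℤ).obj (TopCat.of X)
  let iso : SingularHomology ℤ 1 X ≅ (K.sc' 2 1 0).homology :=
    K.homologyIsoSc' 2 1 0 (by simp) (by simp)
  obtain ⟨q, hq_surj, hq_zero⟩ := exists_surjective_ker_to_homology (K.sc' 2 1 0)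
  let loop : LinearMap.ker (K.sc' 2 1 0).g.hom :=
    ⟨pathChain a, singularBoundary_pathChain_of_loop ha⟩
  have generates (y : (K.sc' 2 1 0).homology) : y ∈ AddSubgroup.zmultiples (q loop) := by
    obtain ⟨x, rfl⟩ := hq_surj y
    obtain ⟨m, hm⟩ := exists_sub_zsmul_pathChain_mem_range_singularBoundary hgen x.2
    refine ⟨m, (sub_eq_zero.1 ?_).symm⟩
    beta_reduce
    rw [← map_zsmul, ← map_sub, hq_zero]
    exact hm
  have order : addOrderOf (q loop) = n := by
    have zsmul_eq_zero_iff (m : ℤ) : m • q loop = 0 ↔ (n : ℤ) ∣ m := by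
      rw [← map_zsmul, hq_zero]
      exact zsmul_pathChain_mem_range_singularBoundary_iff hrel hψ m
    refine Nat.dvd_right_iff_eq.1 fun m => ?_
    rw [← Int.natCast_dvd_natCast, addOrderOf_dvd_iff_zsmul_eq_zero, zsmul_eq_zero_iff,
      Int.natCast_dvd_natCast]
  obtain ⟨e⟩ := nonempty_linearEquiv_zmod generates
  exact ⟨iso.toLinearEquiv.trans (order ▸ e)⟩

end

/-! ### The cocycle of a covering -/

section

variable {E Y A T : Type*} [TopologicalSpace E] [TopologicalSpace Y] [AddCommGroup A]
  [AddAction A E] [TopologicalSpace T] {p : C(E, Y)}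

lemma exists_equivariant_map_of_isAddQuotientCoveringMap (hp : IsAddQuotientCoveringMap p A) :
    ∃ d : E → A, ∀ g e, d (g +ᵥ e) = g + d e := by
  have := hp.isCancelVAdd
  choose s hs using hp.surjective
  have translate (e : E) : ∃ g : A, g +ᵥ s (p e) = e :=
    (hp.apply_eq_iff_mem_orbit (e₂ := s (p e))).1 (hs _).symm
  choose d hd using translate
  refine ⟨d, fun g e => IsCancelVAdd.right_cancel _ _ (s (p e)) ?_⟩
  rw [add_vadd, hd, ← hp.map_vadd g, hd]

lemma exists_lift_of_isAddQuotientCoveringMap [SimplyConnectedSpace T]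
    [LocallyPathConnectedSpace T] (hp : IsAddQuotientCoveringMap p A) (γ : C(T, Y)) :
    ∃ Γ : C(T, E), p.comp Γ = γ := by
  obtain ⟨t₀⟩ : Nonempty T := inferInstance
  obtain ⟨e, he⟩ := hp.surjective (γ t₀)
  obtain ⟨Γ, ⟨-, hΓ⟩, -⟩ := hp.isCoveringMap.existsUnique_continuousMap_lifts γ t₀ e he
  exact ⟨Γ, ContinuousMap.ext (congrFun hΓ)⟩

lemma exists_vadd_eq_of_comp_eq [ConnectedSpace T] (hp : IsAddQuotientCoveringMap p A)
    {Γ Δ : C(T, E)} (h : p.comp Γ = p.comp Δ) : ∃ g : A, ∀ t, g +ᵥ Γ t = Δ t := by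
  have := hp.toContinuousConstVAdd
  obtain ⟨t₀⟩ : Nonempty T := inferInstance
  obtain ⟨g, hg⟩ := hp.apply_eq_iff_mem_orbit.1 (DFunLike.congr_fun h t₀).symm
  refine ⟨g, congrFun <| hp.isCoveringMap.eq_of_comp_eq (Γ.continuous.const_vadd g) Δ.continuous
    (funext fun t => ?_) t₀ hg⟩
  exact (hp.map_vadd g).trans (DFunLike.congr_fun h t)

theorem exists_pathCocycle_of_isAddQuotientCoveringMap (hp : IsAddQuotientCoveringMap p A) :
    ∃ c : PathCocycle Y A, ∀ (Γ : C(I, E)) (g : A), Γ 1 = g +ᵥ Γ 0 → c (p.comp Γ) = g := by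
  obtain ⟨d, hd⟩ := exists_equivariant_map_of_isAddQuotientCoveringMap hp
  have : ContractibleSpace I :=
    (convex_Icc (0 : ℝ) 1).contractibleSpace ⟨0, Set.left_mem_Icc.2 zero_le_one⟩
  have : LocallyPathConnectedSpace I := (convex_Icc (0 : ℝ) 1).locallyPathConnectedSpace
  choose lift hlift using exists_lift_of_isAddQuotientCoveringMap (T := I) hp
  let value (γ : C(I, Y)) : A := d (lift γ 1) - d (lift γ 0)
  have value_comp (Γ : C(I, E)) : value (p.comp Γ) = d (Γ 1) - d (Γ 0) := by
    obtain ⟨g, hg⟩ := exists_vadd_eq_of_comp_eq hp (hlift (p.comp Γ))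
    rw [← hg, ← hg, hd, hd, add_sub_add_left_eq_sub]
  refine ⟨⟨value, fun h => ?_⟩, fun Γ g hg => ?_⟩
  · obtain ⟨H, rfl⟩ := exists_lift_of_isAddQuotientCoveringMap hp h
    simp only [ContinuousMap.comp_assoc, value_comp]
    exact sub_add_sub_cancel' _ _ _
  · exact (value_comp Γ).trans (by rw [hg, hd, add_sub_cancel_right])

end

lemma exists_addMonoidHom_zmultiples_two_pi_I :
    ∃ f : AddSubgroup.zmultiples (2 * Real.pi * Complex.I) →+ ℤ,
      ∀ x, (f x : ℂ) * (2 * Real.pi * Complex.I) = x := by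
  have multiple (x : AddSubgroup.zmultiples (2 * Real.pi * Complex.I)) :
      ∃ m : ℤ, (m : ℂ) * (2 * Real.pi * Complex.I) = x := by
    obtain ⟨m, hm⟩ := x.2
    exact ⟨m, by rw [← hm]; simp⟩
  choose f hf using multiple
  refine ⟨AddMonoidHom.mk' f fun x y => ?_, hf⟩
  have : (f (x + y) : ℂ) = f x + f y := mul_right_cancel₀ Complex.two_pi_I_ne_zero <| by
    rw [add_mul, hf, hf, hf]; rfl
  exact_mod_cast this

theorem exists_windingCocycle : ∃ w : PathCocycle {z : ℂ // z ≠ 0} ℤ,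
    ∀ (Γ : C(I, ℂ)) (γ : C(I, {z : ℂ // z ≠ 0})) (m : ℤ), (∀ t, (γ t : ℂ) = Complex.exp (Γ t)) →
      Γ 1 = Γ 0 + m * (2 * Real.pi * Complex.I) → w γ = m := by
  let exp : C(ℂ, {z : ℂ // z ≠ 0}) := ⟨fun z => ⟨_, z.exp_ne_zero⟩, by fun_prop⟩
  obtain ⟨c, hc⟩ := exists_pathCocycle_of_isAddQuotientCoveringMap (p := exp)
    Complex.isAddQuotientCoveringMap_exp
  obtain ⟨f, hf⟩ := exists_addMonoidHom_zmultiples_two_pi_I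
  refine ⟨c.mapCoeff f, fun Γ γ m hγ hΓ => ?_⟩
  obtain rfl : γ = exp.comp Γ := by
    ext t; exact hγ t
  let g : AddSubgroup.zmultiples (2 * Real.pi * Complex.I) :=
    ⟨m * (2 * Real.pi * Complex.I), m, by simp⟩
  have value : c (exp.comp Γ) = g := hc Γ g (hΓ.trans (add_comm _ _))
  have : (f g : ℂ) = m := mul_right_cancel₀ Complex.two_pi_I_ne_zero (hf g)
  rw [← value] at this
  exact_mod_cast this

/-! ### Configuration spaces -/

/-- The ordered configuration space of `k` points in `M`. -/
abbrev OrdConfigSpace (M : Type) (k : ℕ) : Type := {f : Fin k → M // Function.Injective f}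

namespace OrdConfigSpace

variable {M N : Type} {k : ℕ}

/-- The action of permutations of the labels on ordered configurations. -/
def reindex (τ : Equiv.Perm (Fin k)) (f : OrdConfigSpace M k) : OrdConfigSpace M k :=
  ⟨f.1 ∘ τ, f.2.comp τ.injective⟩

/-- The map between ordered configuration spaces induced by an injection. -/
def map (e : M → N) (he : Function.Injective e) (f : OrdConfigSpace M k) : OrdConfigSpace N k :=
  ⟨e ∘ f.1, he.comp f.2⟩

lemma range_map {e : M → N} (he : Function.Injective e) :
    Set.range (map (k := k) e he) = ⋂ i, {g | g.1 i ∈ Set.range e} := by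
  ext g
  simp only [Set.mem_range, Set.mem_iInter, Set.mem_ofPred_eq]
  constructor
  · rintro ⟨f, rfl⟩ i
    exact ⟨f.1 i, rfl⟩
  · intro h
    choose f hf using h
    exact ⟨⟨f, fun i j hij => g.2 (by rw [← hf, ← hf, hij])⟩, Subtype.ext (funext hf)⟩

variable [TopologicalSpace M] [TopologicalSpace N]

lemma continuous_reindex (τ : Equiv.Perm (Fin k)) : Continuous (reindex (M := M) τ) := by
  refine Continuous.subtype_mk (continuous_pi fun i => ?_) _
  exact (continuous_apply (τ i)).comp continuous_subtype_val

lemma continuous_map {e : M → N} (hc : Continuous e) (he : Function.Injective e) :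
    Continuous (map (k := k) e he) :=
  .subtype_mk (continuous_pi fun i => hc.comp ((continuous_apply i).comp continuous_subtype_val)) _

lemma isOpenEmbedding_map {e : M → N} (he : IsOpenEmbedding e) :
    IsOpenEmbedding (map (k := k) e he.injective) := by
  have embedding : IsEmbedding fun f : OrdConfigSpace M k => e ∘ f.1 :=
    (IsEmbedding.piMap (f := fun _ : Fin k => e) fun _ => he.isEmbedding).comp .subtypeVal
  refine ⟨.of_comp (continuous_map he.continuous _) continuous_subtype_val embedding, ?_⟩
  rw [range_map]
  exact isOpen_iInter_of_finite fun i =>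
    he.isOpen_range.preimage ((continuous_apply i).comp continuous_subtype_val)

end OrdConfigSpace

namespace UnordConfigSpace

open OrdConfigSpace

variable {M N : Type} {k : ℕ}

/-- The unordered configuration underlying an ordered one. -/
def mk (f : OrdConfigSpace M k) : UnordConfigSpace M k := Quotient.mk (configSetoid M k) f

lemma mk_eq_mk {f g : OrdConfigSpace M k} :
    mk f = mk g ↔ ∃ τ : Equiv.Perm (Fin k), f.1 ∘ τ = g.1 :=
  Quotient.eq (r := configSetoid M k)

lemma mk_surjective : Function.Surjective (mk (M := M) (k := k)) := Quotient.mk_surjective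

lemma mk_reindex (τ : Equiv.Perm (Fin k)) (f : OrdConfigSpace M k) : mk (reindex τ f) = mk f :=
  (mk_eq_mk.2 ⟨τ, rfl⟩).symm

lemma preimage_mk_image_mk (U : Set (OrdConfigSpace M k)) :
    mk ⁻¹' (mk '' U) = ⋃ τ : Equiv.Perm (Fin k), reindex τ ⁻¹' U := by
  ext f
  simp only [Set.mem_preimage, Set.mem_image, Set.mem_iUnion]
  constructor
  · rintro ⟨g, hg, h⟩
    obtain ⟨τ, hτ⟩ := mk_eq_mk.1 h.symm
    exact ⟨τ, (Subtype.ext hτ : reindex τ f = g) ▸ hg⟩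
  · rintro ⟨τ, hτ⟩
    exact ⟨_, hτ, mk_reindex τ f⟩

variable [TopologicalSpace M] [TopologicalSpace N]

lemma continuous_mk : Continuous (mk (M := M) (k := k)) := continuous_quotient_mk'

lemma isOpenMap_mk : IsOpenMap (mk (M := M) (k := k)) := by
  intro U hU
  refine (isQuotientMap_quotient_mk' (s := configSetoid M k)).isOpen_preimage.1 ?_
  exact preimage_mk_image_mk U ▸ isOpen_iUnion fun τ => hU.preimage (continuous_reindex τ)

/-- The family of unordered configurations underlying a continuous family of injective tuples. -/
def ofFamily {T : Type*} [TopologicalSpace T] (f : T → Fin k → M) (hc : Continuous f)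
    (hf : ∀ t, Function.Injective (f t)) : C(T, UnordConfigSpace M k) :=
  ⟨fun t => mk ⟨f t, hf t⟩, continuous_mk.comp (hc.subtype_mk _)⟩

/-- The map between unordered configuration spaces induced by a continuous injection. -/
def map (e : C(M, N)) (he : Function.Injective e) :
    C(UnordConfigSpace M k, UnordConfigSpace N k) where
  toFun := Quotient.lift (fun f : OrdConfigSpace M k => mk (f.map e he)) <| by
    rintro f g ⟨τ, hτ⟩
    exact mk_eq_mk.2 ⟨τ, congrArg (e ∘ ·) hτ⟩
  continuous_toFun :=
    (continuous_mk.comp (continuous_map e.continuous he)).quotient_lift (s := configSetoid M k) _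

lemma map_injective (e : C(M, N)) (he : Function.Injective e) :
    Function.Injective (map (k := k) e he) := by
  intro x y h
  obtain ⟨f, rfl⟩ := mk_surjective x
  obtain ⟨g, rfl⟩ := mk_surjective y
  obtain ⟨τ, hτ⟩ := mk_eq_mk.1 h
  exact mk_eq_mk.2 ⟨τ, funext fun i => he (congrFun hτ i)⟩

lemma isOpenEmbedding_map (e : C(M, N)) (he : IsOpenEmbedding e) :
    IsOpenEmbedding (map (k := k) e he.injective) := by
  refine .of_continuous_injective_isOpenMap (map e _).continuous (map_injective e _) fun U hU => ?_
  have image_eq : map e he.injective '' U = mk '' (OrdConfigSpace.map e he.injective ''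
      (mk ⁻¹' U : Set (OrdConfigSpace M k))) := by
    conv_lhs => rw [← Set.image_preimage_eq U mk_surjective]
    rw [Set.image_image, Set.image_image]
    rfl
  rw [image_eq]
  exact isOpenMap_mk _ ((OrdConfigSpace.isOpenEmbedding_map he).isOpenMap _
    (hU.preimage continuous_mk))

end UnordConfigSpace

lemma exists_path_forall_add_mul_ne_zero {ι : Type*} [Countable ι] {a b : ι → ℂ}
    (h₀ : ∀ i, a i ≠ 0) (h₁ : ∀ i, a i + b i ≠ 0) :
    ∃ p : C(I, ℂ), p 0 = 0 ∧ p 1 = 1 ∧ ∀ t i, a i + p t * b i ≠ 0 := by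
  let zeros : Set ℂ := ⋃ i, {t | a i + t * b i = 0}
  have zeros_countable : zeros.Countable := by
    refine Set.countable_iUnion fun i => Set.Subsingleton.countable fun t ht s hs => ?_
    have hb : b i ≠ 0 := fun hb => h₀ i (by simpa [hb] using ht)
    exact mul_right_cancel₀ hb (add_left_cancel (ht.trans hs.symm))
  have connected : IsPathConnected zerosᶜ := zeros_countable.isPathConnected_compl_of_one_lt_rank
    (Complex.rank_real_complex ▸ Nat.one_lt_ofNat)
  obtain ⟨p, hp⟩ := connected.joinedIn 0 (by simpa [zeros] using h₀) 1 (by simpa [zeros] using h₁)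
  exact ⟨p, p.source, p.target, fun t i h => hp t (Set.mem_iUnion.2 ⟨i, h⟩)⟩

lemma exists_path_ordConfigSpace_compl {k : ℕ} {B : Set ℂ} (hB : B.Countable)
    (x y : OrdConfigSpace ℂ k) (hx : ∀ i, x.1 i ∉ B) (hy : ∀ i, y.1 i ∉ B) :
    ∃ γ : C(I, OrdConfigSpace ℂ k), γ 0 = x ∧ γ 1 = y ∧ ∀ t i, (γ t).1 i ∉ B := by
  have := hB.to_subtype
  -- The linear interpolation at a complex time `t` is a configuration outside `B` unless one of
  -- these countably many affine functions of `t` vanishes.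
  let a : {q : Fin k × Fin k // q.1 ≠ q.2} ⊕ (Fin k × B) → ℂ :=
    Sum.elim (fun q => x.1 q.1.1 - x.1 q.1.2) fun q => x.1 q.1 - q.2
  let b : {q : Fin k × Fin k // q.1 ≠ q.2} ⊕ (Fin k × B) → ℂ :=
    Sum.elim (fun q => (y.1 q.1.1 - x.1 q.1.1) - (y.1 q.1.2 - x.1 q.1.2)) fun q =>
      y.1 q.1 - x.1 q.1
  have h₀ (q) : a q ≠ 0 := by
    rcases q with q | q
    · exact sub_ne_zero.2 (x.2.ne q.2)
    · exact sub_ne_zero.2 fun h => hx q.1 (h ▸ q.2.2)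
  have h₁ (q) : a q + b q ≠ 0 := by
    rcases q with q | q
    · convert sub_ne_zero.2 (y.2.ne q.2) using 1
      simp only [a, b, Sum.elim_inl]; ring
    · convert sub_ne_zero.2 fun h : y.1 q.1 = q.2 => hy q.1 (h ▸ q.2.2) using 1
      simp only [a, b, Sum.elim_inr]; ring
  obtain ⟨p, hp₀, hp₁, hp⟩ := exists_path_forall_add_mul_ne_zero h₀ h₁
  let line (t : I) (i : Fin k) : ℂ := x.1 i + p t * (y.1 i - x.1 i)
  have line_injective (t : I) : Function.Injective (line t) := fun i j hij => by
    by_contra hne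
    refine hp t (.inl ⟨(i, j), hne⟩) ?_
    simp only [line, a, b, Sum.elim_inl] at hij ⊢
    linear_combination hij
  refine ⟨⟨fun t => ⟨line t, line_injective t⟩, by fun_prop⟩, ?_, ?_, fun t i hi => ?_⟩
  · ext i; simp [line, hp₀]
  · ext i; simp [line, hp₁]
  · refine hp t (.inr (i, ⟨_, hi⟩)) ?_
    simp only [line, a, b, Sum.elim_inr, ContinuousMap.coe_mk]
    ring

/-! ### Half-twists -/

section HalfTwist

section PairAround

variable {V : Type*} [AddCommGroup V] {k : ℕ} {w : Fin k → V} {i j : Fin k} {ρ : V}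

/-- The tuple `w` with its points `i` and `j` replaced by the pair `w i ± ρ`. -/
def pairAround (w : Fin k → V) (i j : Fin k) (ρ : V) : Fin k → V :=
  fun l => if l = i then w i + ρ else if l = j then w i - ρ else w l

lemma pairAround_left (w : Fin k → V) (i j : Fin k) (ρ : V) : pairAround w i j ρ i = w i + ρ :=
  if_pos rfl

lemma pairAround_right (hij : i ≠ j) (w : Fin k → V) (ρ : V) :
    pairAround w i j ρ j = w i - ρ := by
  simp [pairAround, hij.symm]

lemma pairAround_of_ne {l : Fin k} (hi : l ≠ i) (hj : l ≠ j) (w : Fin k → V) (ρ : V) :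
    pairAround w i j ρ l = w l := by
  simp [pairAround, hi, hj]

lemma continuous_pairAround {T : Type*} [TopologicalSpace T] [TopologicalSpace V]
    [IsTopologicalAddGroup V] {w : T → Fin k → V} {ρ : T → V} (hw : Continuous w)
    (hρ : Continuous ρ) (i j : Fin k) :
    Continuous fun t => pairAround (w t) i j (ρ t) := by
  refine continuous_pi fun l => ?_
  unfold pairAround
  split_ifs <;> fun_prop

lemma pairAround_comp_swap (hij : i ≠ j) (w : Fin k → V) (ρ : V) :
    pairAround w i j ρ ∘ Equiv.swap i j = pairAround w i j (-ρ) := by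
  ext l
  rw [Function.comp_apply]
  rcases eq_or_ne l i with rfl | hi
  · rw [Equiv.swap_apply_left, pairAround_right hij, pairAround_left, sub_eq_add_neg]
  rcases eq_or_ne l j with rfl | hj
  · rw [Equiv.swap_apply_right, pairAround_right hij, pairAround_left, sub_neg_eq_add]
  rw [Equiv.swap_apply_of_ne_of_ne hi hj, pairAround_of_ne hi hj, pairAround_of_ne hi hj]

lemma map_pairAround {V' : Type*} [AddCommGroup V'] (f : V →+ V') (w : Fin k → V) (i j : Fin k)
    (ρ : V) (l : Fin k) : f (pairAround w i j ρ l) = pairAround (fun m => f (w m)) i j (f ρ) l := by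
  simp only [pairAround, apply_ite f, map_add, map_sub]

lemma pairAround_injective [IsAddTorsionFree V] (hij : i ≠ j) (hρ : ρ ≠ 0)
    (hw : Set.InjOn w {i, j}ᶜ) (havoid : ∀ l, l ≠ i → l ≠ j → w l ≠ w i + ρ ∧ w l ≠ w i - ρ) :
    Function.Injective (pairAround w i j ρ) := by
  have hne : w i + ρ ≠ w i - ρ := fun h =>
    hρ (self_eq_neg.1 (add_left_cancel (h.trans (sub_eq_add_neg _ _))))
  have cases (l : Fin k) : (l = i ∧ pairAround w i j ρ l = w i + ρ) ∨
      (l = j ∧ pairAround w i j ρ l = w i - ρ) ∨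
      (l ≠ i ∧ l ≠ j ∧ pairAround w i j ρ l = w l) := by
    grind [pairAround_left, pairAround_right, pairAround_of_ne]
  intro a b hab
  have hab' : a ∈ ({i, j} : Set (Fin k))ᶜ → b ∈ ({i, j} : Set (Fin k))ᶜ → w a = w b → a = b :=
    fun ha hb => hw ha hb
  simp only [Set.mem_compl_iff, Set.mem_insert_iff, Set.mem_singleton_iff, not_or] at hab'
  grind

end PairAround

variable {k : ℕ} {w : Fin k → ℂ} {i j : Fin k} {ρ : ℂ}

/-- No point of `w` other than the points `i` and `j` lies in the disc of radius `‖ρ‖ > 0` around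
`w i`, so that the pair `w i ± ρ` can be rotated freely. -/
def IsTwistRadius (w : Fin k → ℂ) (i j : Fin k) (ρ : ℂ) : Prop :=
  ρ ≠ 0 ∧ ∀ l, l ≠ i → l ≠ j → ‖ρ‖ < ‖w l - w i‖

namespace IsTwistRadius

lemma pairAround_injective (h : IsTwistRadius w i j ρ) (hij : i ≠ j) (hw : Function.Injective w) :
    Function.Injective (pairAround w i j ρ) := by
  refine _root_.pairAround_injective hij h.1 hw.injOn fun l hi hj => ?_
  constructor <;> intro hl <;> simpa [hl] using h.2 l hi hj

lemma mul_exp (h : IsTwistRadius w i j ρ) (θ : ℝ) :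
    IsTwistRadius w i j (ρ * Complex.exp (θ * Complex.I)) := by
  refine ⟨mul_ne_zero h.1 (Complex.exp_ne_zero _), fun l hi hj => ?_⟩
  rw [norm_mul, Complex.norm_exp_ofReal_mul_I, mul_one]
  exact h.2 l hi hj

lemma exp_log_interpolation {ρ' : ℂ} (h : IsTwistRadius w i j ρ) (h' : IsTwistRadius w i j ρ')
    (s : I) : IsTwistRadius w i j
      (Complex.exp ((1 - (s : ℝ)) * Complex.log ρ + (s : ℝ) * Complex.log ρ')) := by
  refine ⟨Complex.exp_ne_zero _, fun l hi hj => ?_⟩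
  have hl := h.2 l hi hj
  have hl' := h'.2 l hi hj
  have mem := (convex_Iio (Real.log ‖w l - w i‖))
    (Real.log_lt_log (norm_pos_iff.2 h.1) hl) (Real.log_lt_log (norm_pos_iff.2 h'.1) hl')
    (sub_nonneg.2 s.2.2) s.2.1 (sub_add_cancel 1 (s : ℝ))
  rw [Complex.norm_exp, ← Real.lt_log_iff_exp_lt ((norm_nonneg ρ).trans_lt hl)]
  simpa [Complex.log_re] using mem

end IsTwistRadius

/-- The path of unordered configurations in which the points `i` and `j` of `w` are replaced by the
moving pair `w i ± R t`. -/
noncomputable def pairPath (w : Fin k → ℂ) (i j : Fin k) (R : C(I, ℂ))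
    (hR : ∀ t, Function.Injective (pairAround w i j (R t))) : C(I, UnordConfigSpace ℂ k) :=
  UnordConfigSpace.ofFamily (fun t => pairAround w i j (R t))
    (continuous_pairAround continuous_const R.continuous i j) hR

/-- The half turn `t ↦ ρ * exp (π * t * I)` from `ρ` to `-ρ`. -/
noncomputable def halfTurn (ρ : ℂ) : C(I, ℂ) :=
  ⟨fun t => ρ * Complex.exp ((Real.pi * t : ℝ) * Complex.I), by fun_prop⟩

lemma halfTurn_zero (ρ : ℂ) : halfTurn ρ 0 = ρ := by simp [halfTurn]

lemma halfTurn_one (ρ : ℂ) : halfTurn ρ 1 = -ρ := by simp [halfTurn]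

/-- The loop of unordered configurations in which the pair `w i ± ρ` makes half a turn. -/
noncomputable def halfTwist (w : OrdConfigSpace ℂ k) (hij : i ≠ j) (h : IsTwistRadius w.1 i j ρ) :
    C(I, UnordConfigSpace ℂ k) :=
  pairPath w.1 i j (halfTurn ρ) fun _ => (h.mul_exp _).pairAround_injective hij w.2

namespace PathCocycle

variable {A : Type*} [AddCommGroup A] (c : PathCocycle (UnordConfigSpace ℂ k) A)

lemma map_pairPath_eq_of_homotopy (hij : i ≠ j) (W : C(I, Fin k → ℂ)) {R₀ R₁ : C(I, ℂ)}
    (F : R₀.Homotopy R₁) (hF : ∀ s, F (s, 1) = -F (s, 0))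
    (hW : ∀ s t, Function.Injective (pairAround (W s) i j (F (s, t))))
    (h₀ : ∀ t, Function.Injective (pairAround (W 0) i j (R₀ t)))
    (h₁ : ∀ t, Function.Injective (pairAround (W 1) i j (R₁ t))) :
    c (pairPath (W 0) i j R₀ h₀) = c (pairPath (W 1) i j R₁ h₁) := by
  let G : (pairPath (W 0) i j R₀ h₀).Homotopy (pairPath (W 1) i j R₁ h₁) :=
    { toContinuousMap := UnordConfigSpace.ofFamily (fun p : I × I => pairAround (W p.1) i j (F p))
        (continuous_pairAround (by fun_prop) (by fun_prop) i j) fun p => hW p.1 p.2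
      map_zero_left t := by simp [pairPath, UnordConfigSpace.ofFamily]
      map_one_left t := by simp [pairPath, UnordConfigSpace.ofFamily] }
  refine c.eq_of_freeHomotopy G fun s => UnordConfigSpace.mk_eq_mk.2 ⟨Equiv.swap i j, ?_⟩
  exact (pairAround_comp_swap hij _ _).trans (congrArg _ (hF s)).symm

lemma halfTwist_eq_of_path (hij : i ≠ j) (W : C(I, OrdConfigSpace ℂ k)) (R : C(I, ℂ))
    (h : ∀ s, IsTwistRadius (W s).1 i j (R s)) :
    c (halfTwist (W 0) hij (h 0)) = c (halfTwist (W 1) hij (h 1)) := by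
  let F : (halfTurn (R 0)).Homotopy (halfTurn (R 1)) :=
    { toFun p := halfTurn (R p.1) p.2
      continuous_toFun := by unfold halfTurn; simp only [ContinuousMap.coe_mk]; fun_prop
      map_zero_left _ := rfl
      map_one_left _ := rfl }
  refine c.map_pairPath_eq_of_homotopy hij ⟨fun s => (W s).1, by fun_prop⟩ F (fun s => ?_)
    (fun s t => ((h s).mul_exp _).pairAround_injective hij (W s).2) _ _
  exact (halfTurn_one _).trans (congrArg _ (halfTurn_zero _)).symm

lemma halfTwist_eq_of_radii (hij : i ≠ j) {w : OrdConfigSpace ℂ k} {ρ ρ' : ℂ}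
    (h : IsTwistRadius w.1 i j ρ) (h' : IsTwistRadius w.1 i j ρ') :
    c (halfTwist w hij h) = c (halfTwist w hij h') := by
  convert c.halfTwist_eq_of_path hij (.const I w)
    ⟨fun s => Complex.exp ((1 - (s : ℝ)) * Complex.log ρ + (s : ℝ) * Complex.log ρ'), by fun_prop⟩
    (h.exp_log_interpolation h') using 3
  · simp [Complex.exp_log h.1]
  · simp [Complex.exp_log h'.1]

end PathCocycle

/-- A continuous choice of a twist radius. -/
noncomputable def safeRadius (i : Fin k) (w : Fin k → ℂ) : ℝ := (1 + ∑ l, ‖w l - w i‖⁻¹)⁻¹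

lemma safeRadius_pos (i : Fin k) (w : Fin k → ℂ) : 0 < safeRadius i w := by
  unfold safeRadius; positivity

lemma safeRadius_lt (w : OrdConfigSpace ℂ k) {i l : Fin k} (h : l ≠ i) :
    safeRadius i w.1 < ‖w.1 l - w.1 i‖ := by
  have hd : 0 < ‖w.1 l - w.1 i‖ := norm_pos_iff.2 (sub_ne_zero.2 (w.2.ne h))
  rw [safeRadius, inv_lt_comm₀ (by positivity) hd]
  have := Finset.single_le_sum (f := fun l => ‖w.1 l - w.1 i‖⁻¹)
    (fun _ _ => by positivity) (Finset.mem_univ l)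
  linarith

lemma continuous_safeRadius (i : Fin k) :
    Continuous fun w : OrdConfigSpace ℂ k => safeRadius i w.1 := by
  have dist (l : Fin k) : Continuous fun w : OrdConfigSpace ℂ k => ‖w.1 l - w.1 i‖ :=
    (((continuous_apply l).comp continuous_subtype_val).sub
      ((continuous_apply i).comp continuous_subtype_val)).norm
  refine Continuous.inv₀ (continuous_const.add <| continuous_finsetSum _ fun l _ => ?_)
    fun w => (by positivity : 0 < 1 + ∑ l, ‖w.1 l - w.1 i‖⁻¹).ne'
  rcases eq_or_ne l i with rfl | h
  · simpa using continuous_const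
  · exact (dist l).inv₀ fun w => norm_ne_zero_iff.2 (sub_ne_zero.2 (w.2.ne h))

lemma isTwistRadius_safeRadius (w : OrdConfigSpace ℂ k) (i j : Fin k) :
    IsTwistRadius w.1 i j (safeRadius i w.1) := by
  refine ⟨by exact_mod_cast (safeRadius_pos i w.1).ne', fun l hi _ => ?_⟩
  rw [Complex.norm_real, Real.norm_of_nonneg (safeRadius_pos _ _).le]
  exact safeRadius_lt w hi

lemma IsTwistRadius.reindex {w : OrdConfigSpace ℂ k} {τ : Equiv.Perm (Fin k)}
    (h : IsTwistRadius w.1 (τ i) (τ j) ρ) : IsTwistRadius (w.reindex τ).1 i j ρ :=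
  ⟨h.1, fun l hi hj => h.2 (τ l) (τ.injective.ne hi) (τ.injective.ne hj)⟩

lemma halfTwist_reindex (hij : i ≠ j) {w : OrdConfigSpace ℂ k} {τ : Equiv.Perm (Fin k)}
    (h : IsTwistRadius w.1 (τ i) (τ j) ρ) :
    halfTwist (w.reindex τ) hij h.reindex = halfTwist w (τ.injective.ne hij) h := by
  ext t
  refine (UnordConfigSpace.mk_eq_mk.2 ⟨τ, funext fun l => ?_⟩).symm
  simp [pairAround, OrdConfigSpace.reindex, τ.injective.eq_iff]

namespace PathCocycle

variable {A : Type*} [AddCommGroup A] (c : PathCocycle (UnordConfigSpace ℂ k) A)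

lemma halfTwist_eq_of_labels (hij : i ≠ j) {w w' : OrdConfigSpace ℂ k} {ρ ρ' : ℂ}
    (h : IsTwistRadius w.1 i j ρ) (h' : IsTwistRadius w'.1 i j ρ') :
    c (halfTwist w hij h) = c (halfTwist w' hij h') := by
  rw [c.halfTwist_eq_of_radii hij h (isTwistRadius_safeRadius w i j),
    c.halfTwist_eq_of_radii hij h' (isTwistRadius_safeRadius w' i j)]
  obtain ⟨γ, rfl, rfl, -⟩ := exists_path_ordConfigSpace_compl Set.countable_empty w w'
    (by simp) (by simp)
  exact c.halfTwist_eq_of_path hij γ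
    ⟨fun s => safeRadius i (γ s).1, Complex.continuous_ofReal.comp
      ((continuous_safeRadius i).comp γ.continuous)⟩ fun s => isTwistRadius_safeRadius (γ s) i j

theorem halfTwist_eq_halfTwist {i' j' : Fin k} (hij : i ≠ j) (hij' : i' ≠ j')
    {w w' : OrdConfigSpace ℂ k} {ρ ρ' : ℂ}
    (h : IsTwistRadius w.1 i j ρ) (h' : IsTwistRadius w'.1 i' j' ρ') :
    c (halfTwist w hij h) = c (halfTwist w' hij' h') := by
  obtain ⟨τ, rfl, rfl⟩ : ∃ τ : Equiv.Perm (Fin k), τ i = i' ∧ τ j = j' :=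
    MulAction.is_two_pretransitive_iff.1 (Equiv.Perm.isMultiplyPretransitive (Fin k) 2) hij hij'
  rw [← halfTwist_reindex hij h']
  exact c.halfTwist_eq_of_labels hij h h'.reindex

end PathCocycle

end HalfTwist

/-! ### Configurations separated by a linear functional -/

section Separated

variable {E : Type} [AddCommGroup E] [Module ℝ E] [TopologicalSpace E] {k : ℕ} {u : E →L[ℝ] ℝ}

/-- The tuples listed in strictly increasing order of the functional `u`. -/
def sortedTuples (u : E →L[ℝ] ℝ) (k : ℕ) : Set (Fin k → E) := {z | StrictMono fun i => u (z i)}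

lemma injective_of_mem_sortedTuples {z : Fin k → E} (hz : z ∈ sortedTuples u k) :
    Function.Injective z :=
  .of_comp (f := u) (StrictMono.injective hz)

lemma isOpen_sortedTuples (u : E →L[ℝ] ℝ) (k : ℕ) : IsOpen (sortedTuples u k) := by
  have eq_iInter : sortedTuples u k = ⋂ i, ⋂ j, ⋂ (_ : i < j), {z | u (z i) < u (z j)} := by
    ext z
    simp only [sortedTuples, StrictMono, Set.mem_iInter, Set.mem_ofPred_eq]
  rw [eq_iInter]
  refine isOpen_iInter_of_finite fun i => isOpen_iInter_of_finite fun j =>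
    isOpen_iInter_of_finite fun _ => isOpen_lt ?_ ?_ <;> fun_prop

lemma convex_sortedTuples (u : E →L[ℝ] ℝ) (k : ℕ) : Convex ℝ (sortedTuples u k) := by
  intro x hx y hy s t hs ht hst i j hij
  have pos := (convex_Ioi (0 : ℝ)) (sub_pos.2 (hx hij)) (sub_pos.2 (hy hij)) hs ht hst
  simp only [smul_eq_mul, Set.mem_Ioi] at pos
  simp only [Pi.add_apply, Pi.smul_apply, map_add, map_smul, smul_eq_mul]
  linarith

lemma smul_mem_sortedTuples {v : E} (hv : 0 < u v) :
    (fun i : Fin k => ((i : ℕ) : ℝ) • v) ∈ sortedTuples u k := by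
  intro i j hij
  have : ((i : ℕ) : ℝ) < (j : ℕ) := by exact_mod_cast hij
  simpa using mul_lt_mul_of_pos_right this hv

/-- The unordered configuration underlying a sorted tuple. -/
def sortedChart (u : E →L[ℝ] ℝ) (k : ℕ) : C(sortedTuples u k, UnordConfigSpace E k) :=
  UnordConfigSpace.ofFamily (fun z => z.1) continuous_subtype_val
    fun z => injective_of_mem_sortedTuples z.2

lemma sortedChart_injective : Function.Injective (sortedChart u k) := by
  intro z z' h
  obtain ⟨τ, hτ⟩ := UnordConfigSpace.mk_eq_mk.1 h
  have values_eq : (fun i => u (z.1 i)) = fun i => u (z'.1 i) := by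
    rw [← StrictMono.range_inj z.2 z'.2]
    calc Set.range (fun i => u (z.1 i)) = Set.range ((fun i => u (z.1 i)) ∘ τ) :=
          (τ.surjective.range_comp _).symm
      _ = Set.range fun i => u (z'.1 i) :=
          congrArg _ (funext fun i => congrArg u (congrFun hτ i))
  have hτ_id (i : Fin k) : τ i = i := StrictMono.injective z.2 <|
    (congrArg u (congrFun hτ i)).trans (congrFun values_eq i).symm
  ext i
  rw [← congrFun hτ i, Function.comp_apply, hτ_id]

lemma isOpenEmbedding_sortedChart (u : E →L[ℝ] ℝ) (k : ℕ) :
    IsOpenEmbedding (sortedChart u k) := by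
  let toOrd (z : sortedTuples u k) : OrdConfigSpace E k :=
    ⟨z.1, injective_of_mem_sortedTuples z.2⟩
  have range_toOrd : Set.range toOrd = Subtype.val ⁻¹' sortedTuples u k :=
    Set.ext fun z => ⟨fun ⟨x, hx⟩ => hx ▸ x.2, fun hz => ⟨⟨z.1, hz⟩, rfl⟩⟩
  have isOpenEmbedding_toOrd : IsOpenEmbedding toOrd :=
    ⟨.of_comp (continuous_subtype_val.subtype_mk _) continuous_subtype_val .subtypeVal,
      range_toOrd ▸ (isOpen_sortedTuples u k).preimage continuous_subtype_val⟩
  exact .of_continuous_injective_isOpenMap (sortedChart u k).continuous sortedChart_injective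
    (UnordConfigSpace.isOpenMap_mk.comp isOpenEmbedding_toOrd.isOpenMap)

/-- The unordered configurations on whose points the functional `u` takes distinct values. -/
def separatedConfigs (u : E →L[ℝ] ℝ) (k : ℕ) : Set (UnordConfigSpace E k) :=
  Set.range (sortedChart u k)

lemma mk_mem_separatedConfigs {z : OrdConfigSpace E k} :
    UnordConfigSpace.mk z ∈ separatedConfigs u k ↔ Function.Injective fun i => u (z.1 i) := by
  constructor
  · rintro ⟨x, hx⟩
    obtain ⟨τ, hτ⟩ := UnordConfigSpace.mk_eq_mk.1 hx
    rw [← hτ]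
    exact (StrictMono.injective x.2).comp τ.injective
  · intro h
    let τ := Tuple.sort fun i => u (z.1 i)
    have sorted : StrictMono ((fun i => u (z.1 i)) ∘ τ) :=
      (Tuple.monotone_sort _).strictMono_of_injective (h.comp τ.injective)
    exact ⟨⟨z.1 ∘ τ, sorted⟩, UnordConfigSpace.mk_reindex τ z⟩

lemma PathCocycle.exists_potential_separatedConfigs [IsTopologicalAddGroup E] [ContinuousSMul ℝ E]
    {A : Type*} [AddCommGroup A] (c : PathCocycle (UnordConfigSpace E k) A) {v : E}
    (hv : 0 < u v) : ∃ f, c.IsPotentialOn (separatedConfigs u k) f :=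
  c.exists_potential_range_of_isEmbedding (isOpenEmbedding_sortedChart u k).isEmbedding <|
    exists_potential_of_starConvex (smul_mem_sortedTuples hv)
      (convex_sortedTuples u k (smul_mem_sortedTuples hv)) _

end Separated

/-! ### Crossing a wall -/

/-- The cocycle vanishes on every half-twist of two points of a planar configuration. -/
def PathCocycle.VanishesOnHalfTwists {k : ℕ} {A : Type*} [AddCommGroup A]
    (c : PathCocycle (UnordConfigSpace ℂ k) A) : Prop :=
  ∀ (w : OrdConfigSpace ℂ k) {i j : Fin k} (hij : i ≠ j) {ρ : ℂ} (h : IsTwistRadius w.1 i j ρ),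
    c (halfTwist w hij h) = 0

section Crossing

variable {k : ℕ} {i j : Fin k} {w : OrdConfigSpace ℂ k} {u v : ℂ →L[ℝ] ℝ} {r : ℝ}

lemma pairAround_injective_of_abs_le {ρ : ℂ} (hij : i ≠ j)
    (hw : ∀ l, l ≠ i → l ≠ j → r < |u (w.1 l - w.1 i)|) (hρ : ρ ≠ 0) (hu : |u ρ| ≤ r) :
    Function.Injective (pairAround w.1 i j ρ) := by
  refine pairAround_injective hij hρ w.2.injOn fun l hi hj => ?_
  constructor <;> intro hl <;> have := hw l hi hj <;> rw [hl] at this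
  · rw [add_sub_cancel_left] at this
    exact hu.not_gt this
  · rw [sub_sub_cancel_left, map_neg, abs_neg] at this
    exact hu.not_gt this

lemma exists_pos_opNorm_mul_norm_smul_le (u : ℂ →L[ℝ] ℝ) (ρ : ℂ) (hr : 0 < r) :
    ∃ ε : ℝ, 0 < ε ∧ ‖u‖ * ‖ε • ρ‖ ≤ r := by
  have hpos : 0 < ‖u‖ * ‖ρ‖ + 1 := by positivity
  refine ⟨r / (‖u‖ * ‖ρ‖ + 1), by positivity, ?_⟩
  rw [norm_smul, Real.norm_of_nonneg (by positivity), mul_left_comm, div_mul_eq_mul_div,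
    div_le_iff₀ hpos]
  nlinarith

lemma isTwistRadius_of_opNorm_mul_norm_le {ρ : ℂ}
    (hw : ∀ l, l ≠ i → l ≠ j → r < |u (w.1 l - w.1 i)|) (hρ : ρ ≠ 0) (hu : ‖u‖ * ‖ρ‖ ≤ r) :
    IsTwistRadius w.1 i j ρ :=
  ⟨hρ, fun l hi hj => lt_of_mul_lt_mul_left
    (hu.trans_lt ((hw l hi hj).trans_le (u.le_opNorm _))) (norm_nonneg u)⟩

lemma halfTurn_div_im (ρ : ℂ) (hρ : ρ ≠ 0) (ε : ℝ) (t : I) :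
    (halfTurn (ε • ρ) t / ρ).im = ε * Real.sin (Real.pi * t) := by
  have : halfTurn (ε • ρ) t / ρ = ε * Complex.exp ((Real.pi * t : ℝ) * Complex.I) := by
    simp only [halfTurn, ContinuousMap.coe_mk, Complex.real_smul]
    field_simp
  rw [this, Complex.im_ofReal_mul, Complex.exp_ofReal_mul_I_im]

lemma lineMap_halfTurn_ne_zero {R : C(I, ℂ)} (hR₀ : R 0 ≠ 0) (hR₁ : R 1 = -R 0)
    (him : ∀ t, t ≠ 0 → t ≠ 1 → 0 < (R t / R 0).im) {ε : ℝ} (hε : 0 < ε) (s t : I) :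
    (1 - (s : ℝ)) • R t + (s : ℝ) • halfTurn (ε • R 0) t ≠ 0 := by
  have coeff_pos : 0 < (1 - (s : ℝ)) + s * ε :=
    (convex_Ioi (0 : ℝ)) (Set.mem_Ioi.2 one_pos) hε (sub_nonneg.2 s.2.2) s.2.1 (by ring) |>.trans_eq
      (by simp)
  rcases eq_or_ne t 0 with rfl | ht₀
  · rw [halfTurn_zero, smul_smul, ← add_smul]
    exact smul_ne_zero coeff_pos.ne' hR₀
  rcases eq_or_ne t 1 with rfl | ht₁
  · rw [halfTurn_one, hR₁, smul_neg, smul_neg, smul_smul, ← neg_add, ← add_smul]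
    exact neg_ne_zero.2 (smul_ne_zero coeff_pos.ne' hR₀)
  have sin_pos : 0 < Real.sin (Real.pi * t) := Real.sin_pos_of_pos_of_lt_pi
    (mul_pos Real.pi_pos (unitInterval.pos_iff_ne_zero.2 ht₀))
    (mul_lt_of_lt_one_right Real.pi_pos (unitInterval.lt_one_iff_ne_one.2 ht₁))
  intro h
  have im_pos : 0 < (1 - (s : ℝ)) * (R t / R 0).im + s * (ε * Real.sin (Real.pi * t)) :=
    (convex_Ioi (0 : ℝ)) (him t ht₀ ht₁) (mul_pos hε sin_pos) (sub_nonneg.2 s.2.2) s.2.1 (by ring)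
  rw [← halfTurn_div_im _ hR₀, ← Complex.im_ofReal_mul, ← Complex.im_ofReal_mul,
    ← Complex.add_im, ← mul_div_assoc, ← mul_div_assoc, ← add_div, ← Complex.real_smul,
    ← Complex.real_smul, h, zero_div] at im_pos
  exact im_pos.false

theorem PathCocycle.exists_map_pairPath_eq_map_halfTwist {A : Type*} [AddCommGroup A]
    (c : PathCocycle (UnordConfigSpace ℂ k) A) (hij : i ≠ j) (hr : 0 < r)
    (hw : ∀ l, l ≠ i → l ≠ j → r < |u (w.1 l - w.1 i)|) {R : C(I, ℂ)} (hR₀ : R 0 ≠ 0)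
    (hR₁ : R 1 = -R 0) (him : ∀ t, t ≠ 0 → t ≠ 1 → 0 < (R t / R 0).im)
    (hu : ∀ t, |u (R t)| ≤ r) (hR : ∀ t, Function.Injective (pairAround w.1 i j (R t))) :
    ∃ (ρ : ℂ) (h : IsTwistRadius w.1 i j ρ),
      c (pairPath w.1 i j R hR) = c (halfTwist w hij h) := by
  obtain ⟨ε, hε, hεr⟩ := exists_pos_opNorm_mul_norm_smul_le u (R 0) hr
  have twist : IsTwistRadius w.1 i j (ε • R 0) :=
    isTwistRadius_of_opNorm_mul_norm_le hw (smul_ne_zero hε.ne' hR₀) hεr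
  have hu_turn (t : I) : |u (halfTurn (ε • R 0) t)| ≤ r := by
    refine (u.le_opNorm _).trans (le_trans (le_of_eq ?_) hεr)
    rw [halfTurn, ContinuousMap.coe_mk, norm_mul, Complex.norm_exp_ofReal_mul_I, mul_one]
  let F : R.Homotopy (halfTurn (ε • R 0)) :=
    { toFun p := (1 - (p.1 : ℝ)) • R p.2 + (p.1 : ℝ) • halfTurn (ε • R 0) p.2
      map_zero_left t := by simp
      map_one_left t := by simp }
  refine ⟨_, twist, c.map_pairPath_eq_of_homotopy hij (.const I w.1) F (fun s => ?_)
    (fun s t => pairAround_injective_of_abs_le hij hw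
      (lineMap_halfTurn_ne_zero hR₀ hR₁ him hε s t) ?_) _ _⟩
  · change (1 - (s : ℝ)) • R 1 + (s : ℝ) • halfTurn _ 1 =
      -((1 - (s : ℝ)) • R 0 + (s : ℝ) • halfTurn _ 0)
    rw [halfTurn_zero, halfTurn_one, hR₁]
    module
  · change |u ((1 - (s : ℝ)) • R t + (s : ℝ) • halfTurn _ t)| ≤ r
    rw [map_add, map_smul, map_smul]
    exact abs_le.2 <| (convex_Icc (-r) r) (abs_le.1 (hu t)) (abs_le.1 (hu_turn t))
      (sub_nonneg.2 s.2.2) s.2.1 (by ring)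

/-- The path `α + β ⇝ -α + β ⇝ -α - β` along two sides of a parallelogram. -/
noncomputable def cornerPath (α β : ℂ) : C(I, ℂ) :=
  ⟨fun t => max (1 - 4 * (t : ℝ)) (-1) • α + min 1 (3 - 4 * (t : ℝ)) • β, by fun_prop⟩

variable {α β : ℂ}

lemma cornerPath_zero (α β : ℂ) : cornerPath α β 0 = α + β := by
  norm_num [cornerPath]

lemma cornerPath_one (α β : ℂ) : cornerPath α β 1 = -(α + β) := by
  norm_num [cornerPath]
  ring

lemma cornerPath_of_le_half (α β : ℂ) {t : I} (ht : (t : ℝ) ≤ 1 / 2) :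
    cornerPath α β t = (1 - 4 * (t : ℝ)) • α + β := by
  rw [cornerPath, ContinuousMap.coe_mk, max_eq_left (by linarith), min_eq_left (by linarith),
    one_smul]

lemma cornerPath_of_half_le (α β : ℂ) {t : I} (ht : 1 / 2 ≤ (t : ℝ)) :
    cornerPath α β t = -α + (3 - 4 * (t : ℝ)) • β := by
  rw [cornerPath, ContinuousMap.coe_mk, max_eq_right (by linarith), min_eq_right (by linarith),
    neg_one_smul]

lemma abs_map_cornerPath_le (hu : u β = 0) (t : I) : |u (cornerPath α β t)| ≤ |u α| := by
  have abs_le_one : |max (1 - 4 * (t : ℝ)) (-1)| ≤ 1 :=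
    abs_le.2 ⟨le_max_right _ _, max_le (by linarith [t.2.1]) (by norm_num)⟩
  rw [cornerPath, ContinuousMap.coe_mk, map_add, map_smul, map_smul, hu, smul_zero, add_zero,
    smul_eq_mul, abs_mul]
  exact mul_le_of_le_one_left (abs_nonneg _) abs_le_one

lemma add_ne_zero_of_map (hu : u β = 0) (hα : u α ≠ 0) : α + β ≠ 0 := by
  intro h
  have map_add_eq := map_add u α β
  rw [h, map_zero, hu, add_zero] at map_add_eq
  exact hα map_add_eq.symm

lemma cornerPath_ne_zero (hu : u β = 0) (hα : u α ≠ 0) (hv : v α = 0) (hβ : v β ≠ 0) (t : I) :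
    cornerPath α β t ≠ 0 := by
  rcases le_total (t : ℝ) (1 / 2) with ht | ht
  · rw [cornerPath_of_le_half α β ht, add_comm]
    exact add_ne_zero_of_map (by rw [map_smul, hv, smul_zero]) hβ
  · rw [cornerPath_of_half_le α β ht]
    exact add_ne_zero_of_map (by rw [map_smul, hu, smul_zero]) (by rwa [map_neg, neg_ne_zero])

lemma exists_pos_cornerPath_div_im (h : α + β ≠ 0) {t : I} (ht₀ : t ≠ 0) (ht₁ : t ≠ 1) :
    ∃ d : ℝ, 0 < d ∧ (cornerPath α β t / (α + β)).im = d * (β / (α + β)).im := by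
  have t_pos : 0 < (t : ℝ) := unitInterval.pos_iff_ne_zero.2 ht₀
  have t_lt_one : (t : ℝ) < 1 := unitInterval.lt_one_iff_ne_one.2 ht₁
  set x := max (1 - 4 * (t : ℝ)) (-1) with hx
  set y := min 1 (3 - 4 * (t : ℝ)) with hy
  have decomposition : cornerPath α β t / (α + β) = x + ((y - x : ℝ) : ℂ) * (β / (α + β)) := by
    simp only [cornerPath, ContinuousMap.coe_mk, Complex.real_smul, ← hx, ← hy]
    push_cast
    field_simp
    ring
  refine ⟨y - x, sub_pos.2 (max_lt ?_ ?_), ?_⟩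
  · exact lt_min (by linarith) (by linarith)
  · exact lt_min (by norm_num) (by linarith)
  · rw [decomposition, Complex.add_im, Complex.ofReal_im, zero_add, Complex.im_ofReal_mul]

lemma div_add_im_ne_zero (hu : u β = 0) (hα : u α ≠ 0) (hβ : β ≠ 0) :
    (β / (α + β)).im ≠ 0 := by
  intro him
  have add_ne : α + β ≠ 0 := add_ne_zero_of_map hu hα
  obtain ⟨x, hx⟩ : ∃ x : ℝ, β = x • (α + β) :=
    ⟨(β / (α + β)).re, by
      rw [Complex.real_smul, ← div_eq_iff add_ne]
      exact Complex.ext rfl him⟩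
  have hux := congrArg u hx
  rw [map_smul, map_add, hu, add_zero, smul_eq_mul, zero_eq_mul] at hux
  rw [hux.resolve_right hα, zero_smul] at hx
  exact hβ hx

lemma PathCocycle.map_cornerPath_eq_zero {A : Type*} [AddCommGroup A]
    {c : PathCocycle (UnordConfigSpace ℂ k) A} (hc : c.VanishesOnHalfTwists) (hij : i ≠ j)
    (hu : u β = 0) (hα : u α ≠ 0) (hβ : β ≠ 0)
    (hw : ∀ l, l ≠ i → l ≠ j → |u α| < |u (w.1 l - w.1 i)|)
    (hinj : ∀ t, Function.Injective (pairAround w.1 i j (cornerPath α β t))) :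
    c (pairPath w.1 i j (cornerPath α β) hinj) = 0 := by
  have add_ne : α + β ≠ 0 := add_ne_zero_of_map hu hα
  rcases (div_add_im_ne_zero hu hα hβ).lt_or_gt with him | him
  · let R : C(I, ℂ) := (cornerPath α β).comp ⟨unitInterval.symm, by fun_prop⟩
    have hR₀ : R 0 = -(α + β) := by simp [R, cornerPath_one]
    have hR₁ : R 1 = α + β := by simp [R, cornerPath_zero]
    obtain ⟨ρ, h, eq⟩ := c.exists_map_pairPath_eq_map_halfTwist hij (abs_pos.2 hα) hw (R := R)
      (by rwa [hR₀, neg_ne_zero]) (by rw [hR₁, hR₀, neg_neg])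
      (fun t ht₀ ht₁ => by
        obtain ⟨d, hd, hdim⟩ := exists_pos_cornerPath_div_im add_ne
          (t := σ t) (by simpa) (by simpa)
        rw [hR₀, div_neg, Complex.neg_im]
        exact neg_pos.2 (hdim.trans_lt (mul_neg_of_pos_of_neg hd him)))
      (fun t => abs_map_cornerPath_le hu _) (fun t => hinj _)
    rw [← neg_eq_zero, ← c.map_comp_symm, ← hc w hij h, ← eq]
    rfl
  · obtain ⟨ρ, h, eq⟩ := c.exists_map_pairPath_eq_map_halfTwist hij (abs_pos.2 hα) hw
      (R := cornerPath α β) (by rwa [cornerPath_zero]) (by rw [cornerPath_zero, cornerPath_one])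
      (fun t ht₀ ht₁ => by
        obtain ⟨d, hd, hdim⟩ := exists_pos_cornerPath_div_im add_ne ht₀ ht₁
        rw [cornerPath_zero, hdim]
        exact mul_pos hd him)
      (abs_map_cornerPath_le hu) hinj
    rw [eq, hc]

lemma pairAround_mem_separatedConfigs (hij : i ≠ j) {ρ : ℂ} (hρ : u ρ ≠ 0)
    (hw : Set.InjOn (fun l => u (w.1 l)) {i, j}ᶜ)
    (havoid : ∀ l, l ≠ i → l ≠ j → u (w.1 l) ≠ u (w.1 i) + u ρ ∧ u (w.1 l) ≠ u (w.1 i) - u ρ)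
    (hinj : Function.Injective (pairAround w.1 i j ρ)) :
    UnordConfigSpace.mk ⟨_, hinj⟩ ∈ separatedConfigs u k := by
  rw [mk_mem_separatedConfigs]
  have map_eq (l : Fin k) : u (pairAround w.1 i j ρ l) = _ :=
    map_pairAround (u : ℂ →+ ℝ) w.1 i j ρ l
  simp only [map_eq]
  exact pairAround_injective hij hρ hw havoid

/- The corner path stays in the configurations separated by `v` up to its corner and in those
separated by `u` afterwards, and it runs around a loop on which the cocycle vanishes. -/
theorem PathCocycle.potential_sub_eq_of_crossing {A : Type*} [AddCommGroup A]
    {c : PathCocycle (UnordConfigSpace ℂ k) A} (hc : c.VanishesOnHalfTwists) (hij : i ≠ j)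
    (hu : u β = 0) (hα : u α ≠ 0) (hv : v α = 0) (hβ : v β ≠ 0)
    (hu_inj : Set.InjOn (fun l => u (w.1 l)) {i, j}ᶜ)
    (hu_avoid : ∀ l, l ≠ i → l ≠ j → |u α| < |u (w.1 l - w.1 i)|)
    (hv_inj : Set.InjOn (fun l => v (w.1 l)) {i, j}ᶜ)
    (hv_avoid : ∀ l, l ≠ i → l ≠ j → v (w.1 l) ≠ v (w.1 i) + v β ∧ v (w.1 l) ≠ v (w.1 i) - v β)
    {f g : UnordConfigSpace ℂ k → A} (hf : c.IsPotentialOn (separatedConfigs u k) f)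
    (hg : c.IsPotentialOn (separatedConfigs v k) g)
    (h₁ : Function.Injective (pairAround w.1 i j (α + β)))
    (h₂ : Function.Injective (pairAround w.1 i j (-α + β))) :
    f (.mk ⟨_, h₁⟩) - g (.mk ⟨_, h₁⟩) = f (.mk ⟨_, h₂⟩) - g (.mk ⟨_, h₂⟩) := by
  have hinj (t : I) : Function.Injective (pairAround w.1 i j (cornerPath α β t)) :=
    pairAround_injective_of_abs_le hij hu_avoid (cornerPath_ne_zero hu hα hv hβ t)
      (abs_map_cornerPath_le hu t)
  let γ := pairPath w.1 i j (cornerPath α β) hinj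
  let m : I := ⟨1 / 2, by norm_num, by norm_num⟩
  have hγ₀ : γ 0 = .mk ⟨_, h₁⟩ := by
    simp only [γ, pairPath, UnordConfigSpace.ofFamily, ContinuousMap.coe_mk, cornerPath_zero]
  have hγ₁ : γ 1 = .mk ⟨_, h₁⟩ := by
    simp only [γ, pairPath, UnordConfigSpace.ofFamily, ContinuousMap.coe_mk, cornerPath_one]
    exact (UnordConfigSpace.mk_eq_mk.2 ⟨Equiv.swap i j, pairAround_comp_swap hij _ _⟩).symm
  have hγm : γ m = .mk ⟨_, h₂⟩ := by
    have corner : cornerPath α β m = -α + β := by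
      rw [cornerPath_of_le_half α β le_rfl]
      norm_num [m]
    simp only [γ, pairPath, UnordConfigSpace.ofFamily, ContinuousMap.coe_mk, corner]
  have map_before (t : I) (ht : t ≤ m) : v (cornerPath α β t) = v β := by
    rw [cornerPath_of_le_half α β ht, map_add, map_smul, hv, smul_zero, zero_add]
  have map_after (t : I) (ht : t ≥ m) : u (cornerPath α β t) = -u α := by
    rw [cornerPath_of_half_le α β ht, map_add, map_smul, hu, smul_zero, add_zero, map_neg]
  have hu_avoid' (l : Fin k) (hi : l ≠ i) (hj : l ≠ j) :
      u (w.1 l) ≠ u (w.1 i) - u α ∧ u (w.1 l) ≠ u (w.1 i) + u α := by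
    have := hu_avoid l hi hj
    rw [map_sub] at this
    constructor <;> intro h <;> rw [h] at this <;> simp at this
  have split := c.map_eq_add_of_isPotentialOn hg hf γ m
    (fun t ht => pairAround_mem_separatedConfigs hij (by rwa [map_before t ht]) hv_inj
      (by simpa only [map_before t ht] using hv_avoid) (hinj t))
    (fun t ht => pairAround_mem_separatedConfigs hij (by rwa [map_after t ht, neg_ne_zero]) hu_inj
      (by simpa only [map_after t ht, ← sub_eq_add_neg, sub_neg_eq_add] using hu_avoid') (hinj t))
  rw [c.map_cornerPath_eq_zero hc hij hu hα (ne_of_apply_ne v (by rwa [map_zero])) hu_avoid hinj,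
    hγ₀, hγ₁, hγm] at split
  grind

end Crossing

/-! ### Gluing the potentials of the separated configurations -/

section Chambers

variable {E : Type} [AddCommGroup E] [Module ℝ E] [TopologicalSpace E] {k : ℕ}
  {u v : E →L[ℝ] ℝ} {α β : E}

lemma PathCocycle.potential_sub_eq_of_sorted [IsTopologicalAddGroup E] [ContinuousSMul ℝ E]
    {A : Type*} [AddCommGroup A] {c : PathCocycle (UnordConfigSpace E k) A}
    {f g : UnordConfigSpace E k → A} (hf : c.IsPotentialOn (separatedConfigs u k) f)
    (hg : c.IsPotentialOn (separatedConfigs v k) g) {z z' : OrdConfigSpace E k}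
    (q : Equiv.Perm (Fin k)) (hu : z.1 ∘ q ∈ sortedTuples u k) (hu' : z'.1 ∘ q ∈ sortedTuples u k)
    (hv : z.1 ∈ sortedTuples v k) (hv' : z'.1 ∈ sortedTuples v k) :
    f (.mk z) - g (.mk z) = f (.mk z') - g (.mk z') := by
  let L (t : I) : Fin k → E := (1 - (t : ℝ)) • z.1 + (t : ℝ) • z'.1
  have sorted_right (t : I) : L t ∈ sortedTuples v k :=
    convex_sortedTuples v k hv hv' (sub_nonneg.2 t.2.2) t.2.1 (by ring)
  have sorted_left (t : I) : L t ∘ q ∈ sortedTuples u k :=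
    convex_sortedTuples u k hu hu' (sub_nonneg.2 t.2.2) t.2.1 (by ring)
  let γ : C(I, UnordConfigSpace E k) := UnordConfigSpace.ofFamily L (by fun_prop)
    fun t => injective_of_mem_sortedTuples (sorted_right t)
  have hγ₀ : γ 0 = .mk z := congrArg UnordConfigSpace.mk (Subtype.ext (by simp [L]))
  have hγ₁ : γ 1 = .mk z' := congrArg UnordConfigSpace.mk (Subtype.ext (by simp [L]))
  have hfγ := hf γ fun t => mk_mem_separatedConfigs.2 <|
    (Equiv.injective_comp q fun i => u (L t i)).1 (sorted_left t).injective
  have hgγ := hg γ fun t => mk_mem_separatedConfigs.2 (sorted_right t).injective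
  rw [hγ₀, hγ₁] at hfγ hgγ
  grind

/-- The vectors `α`, `β` form the basis dual to the functionals `u`, `v`. -/
structure IsDualPair (u v : E →L[ℝ] ℝ) (α β : E) : Prop where
  left_left : u α = 1
  left_right : u β = 0
  right_left : v α = 0
  right_right : v β = 1

/-- The tuple whose `i`-th point has coordinates `p i` and `i` in the directions `α` and `β`. -/
def permTuple (α β : E) (p : Equiv.Perm (Fin k)) (i : Fin k) : E :=
  ((p i : ℕ) : ℝ) • α + ((i : ℕ) : ℝ) • β

namespace IsDualPair

lemma left_permTuple (h : IsDualPair u v α β) (p : Equiv.Perm (Fin k)) (i : Fin k) :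
    u (permTuple α β p i) = (p i : ℕ) := by
  simp [permTuple, h.left_left, h.left_right]

lemma right_permTuple (h : IsDualPair u v α β) (p : Equiv.Perm (Fin k)) (i : Fin k) :
    v (permTuple α β p i) = (i : ℕ) := by
  simp [permTuple, h.right_left, h.right_right]

lemma permTuple_mem_sortedTuples (h : IsDualPair u v α β) (p : Equiv.Perm (Fin k)) :
    permTuple α β p ∈ sortedTuples v k := by
  intro i j hij
  simpa only [h.right_permTuple, Nat.cast_lt, Fin.val_fin_lt] using hij

lemma permTuple_comp_inv_mem_sortedTuples (h : IsDualPair u v α β) (p : Equiv.Perm (Fin k)) :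
    permTuple α β p ∘ ⇑p⁻¹ ∈ sortedTuples u k := by
  intro i j hij
  simpa [h.left_permTuple] using hij

lemma permTuple_injective (h : IsDualPair u v α β) (p : Equiv.Perm (Fin k)) :
    Function.Injective (permTuple α β p) :=
  injective_of_mem_sortedTuples (h.permTuple_mem_sortedTuples p)

end IsDualPair

lemma exists_perm_potential_sub_eq [IsTopologicalAddGroup E] [ContinuousSMul ℝ E]
    {A : Type*} [AddCommGroup A] {c : PathCocycle (UnordConfigSpace E k) A}
    {f g : UnordConfigSpace E k → A} (hf : c.IsPotentialOn (separatedConfigs u k) f)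
    (hg : c.IsPotentialOn (separatedConfigs v k) g) (h : IsDualPair u v α β)
    {x : UnordConfigSpace E k} (hxu : x ∈ separatedConfigs u k) (hxv : x ∈ separatedConfigs v k) :
    ∃ p : Equiv.Perm (Fin k), f x - g x =
      f (.mk ⟨_, h.permTuple_injective p⟩) - g (.mk ⟨_, h.permTuple_injective p⟩) := by
  obtain ⟨z, rfl⟩ := hxv
  have hzu : Function.Injective fun i => u (z.1 i) := mk_mem_separatedConfigs.1 hxu
  let q := Tuple.sort fun i => u (z.1 i)
  have sorted : z.1 ∘ q ∈ sortedTuples u k :=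
    (Tuple.monotone_sort _).strictMono_of_injective (hzu.comp q.injective)
  exact ⟨q⁻¹, PathCocycle.potential_sub_eq_of_sorted hf hg
    (z := ⟨z.1, injective_of_mem_sortedTuples z.2⟩) q sorted
    (h.permTuple_comp_inv_mem_sortedTuples q⁻¹) z.2 (h.permTuple_mem_sortedTuples q⁻¹)⟩

end Chambers

section Transposition

variable {k : ℕ} {u v : ℂ →L[ℝ] ℝ} {α β : ℂ} {i j : Fin k} {p : Equiv.Perm (Fin k)}

lemma half_lt_abs_natCast_sub {n m : ℕ} (h₀ : n ≠ m) (h₁ : n ≠ m + 1) :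
    1 / 2 < |(n : ℝ) - (m + 1 / 2)| := by
  rw [lt_abs]
  rcases h₀.lt_or_gt with hlt | hgt
  · have : (n : ℝ) + 1 ≤ m := by exact_mod_cast hlt
    exact .inr (by linarith)
  · have : (m : ℝ) + 2 ≤ n := by exact_mod_cast (show m + 2 ≤ n by omega)
    exact .inl (by linarith)

/-- The tuple obtained from `permTuple α β p` by moving the point `i` to its midpoint with the
point `j`. -/
noncomputable def midpointTuple (α β : ℂ) (p : Equiv.Perm (Fin k)) (i j : Fin k) : Fin k → ℂ :=
  Function.update (permTuple α β p) i (midpoint ℝ (permTuple α β p i) (permTuple α β p j))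

lemma midpointTuple_self : midpointTuple α β p i j i =
    (((p i : ℕ) + (p j : ℕ) : ℝ) / 2) • α + (((i : ℕ) + (j : ℕ) : ℝ) / 2) • β := by
  rw [midpointTuple, Function.update_self, midpoint_eq_smul_add, permTuple, permTuple, invOf_eq_inv]
  module

lemma midpointTuple_of_ne {l : Fin k} (hl : l ≠ i) :
    midpointTuple α β p i j l = permTuple α β p l :=
  Function.update_of_ne hl _ _

lemma pairAround_midpointTuple (hij : i ≠ j) :
    pairAround (midpointTuple α β p i j) i j
      ((((p i : ℕ) - (p j : ℕ) : ℝ) / 2) • α + (((i : ℕ) - (j : ℕ) : ℝ) / 2) • β) =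
      permTuple α β p := by
  ext1 l
  rcases eq_or_ne l i with rfl | hi
  · rw [pairAround_left, midpointTuple_self, permTuple]
    module
  rcases eq_or_ne l j with rfl | hj
  · rw [pairAround_right hij, midpointTuple_self, permTuple]
    module
  rw [pairAround_of_ne hi hj, midpointTuple_of_ne hi]

lemma pairAround_midpointTuple_swap (hij : i ≠ j) :
    pairAround (midpointTuple α β p i j) i j
      (-((((p i : ℕ) - (p j : ℕ) : ℝ) / 2) • α) + (((i : ℕ) - (j : ℕ) : ℝ) / 2) • β) =
      permTuple α β (Equiv.swap (p i) (p j) * p) := by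
  ext1 l
  rw [permTuple, Equiv.Perm.mul_apply]
  rcases eq_or_ne l i with rfl | hi
  · rw [pairAround_left, midpointTuple_self, Equiv.swap_apply_left]
    module
  rcases eq_or_ne l j with rfl | hj
  · rw [pairAround_right hij, midpointTuple_self, Equiv.swap_apply_right]
    module
  rw [pairAround_of_ne hi hj, midpointTuple_of_ne hi,
    Equiv.swap_apply_of_ne_of_ne (p.injective.ne hi) (p.injective.ne hj), permTuple]

namespace IsDualPair

lemma left_midpointTuple_self (h : IsDualPair u v α β) (hp : (p i : ℕ) = p j + 1) :
    u (midpointTuple α β p i j i) = (p j : ℕ) + 1 / 2 := by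
  rw [midpointTuple_self, map_add, map_smul, map_smul, h.left_left, h.left_right, hp]
  simp only [smul_eq_mul]
  push_cast
  ring

lemma right_midpointTuple_self (h : IsDualPair u v α β) :
    v (midpointTuple α β p i j i) = ((i : ℕ) + (j : ℕ)) / 2 := by
  rw [midpointTuple_self, map_add, map_smul, map_smul, h.right_left, h.right_right]
  simp only [smul_eq_mul]
  ring

lemma left_midpointTuple (h : IsDualPair u v α β) {l : Fin k} (hl : l ≠ i) :
    u (midpointTuple α β p i j l) = (p l : ℕ) := by
  rw [midpointTuple_of_ne hl, h.left_permTuple]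

lemma right_midpointTuple (h : IsDualPair u v α β) {l : Fin k} (hl : l ≠ i) :
    v (midpointTuple α β p i j l) = (l : ℕ) := by
  rw [midpointTuple_of_ne hl, h.right_permTuple]

lemma injOn_left_midpointTuple (h : IsDualPair u v α β) :
    Set.InjOn (fun l => u (midpointTuple α β p i j l)) {i}ᶜ := by
  intro l hl l' hl' hll'
  simp only [h.left_midpointTuple hl, h.left_midpointTuple hl', Nat.cast_inj] at hll'
  exact p.injective (Fin.ext hll')

lemma injOn_right_midpointTuple (h : IsDualPair u v α β) :
    Set.InjOn (fun l => v (midpointTuple α β p i j l)) {i}ᶜ := by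
  intro l hl l' hl' hll'
  simp only [h.right_midpointTuple hl, h.right_midpointTuple hl', Nat.cast_inj] at hll'
  exact Fin.ext hll'

lemma midpointTuple_injective (h : IsDualPair u v α β) (hp : (p i : ℕ) = p j + 1) :
    Function.Injective (midpointTuple α β p i j) := by
  have self_ne {l : Fin k} (hl : l ≠ i) :
      midpointTuple α β p i j l ≠ midpointTuple α β p i j i := by
    refine ne_of_apply_ne u ?_
    rw [h.left_midpointTuple hl, h.left_midpointTuple_self hp]
    intro heq
    have : ((2 * (p l : ℕ) : ℕ) : ℝ) = (2 * (p j : ℕ) + 1 : ℕ) := by push_cast; linarith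
    have := Nat.cast_injective this
    omega
  intro l l' hll'
  by_cases hl : l = i <;> by_cases hl' : l' = i
  · rw [hl, hl']
  · exact absurd (hll'.symm.trans (hl ▸ rfl)) (self_ne hl')
  · exact absurd (hll'.trans (hl' ▸ rfl)) (self_ne hl)
  · exact h.injOn_left_midpointTuple hl hl' (congrArg u hll')

end IsDualPair

variable {A : Type*} [AddCommGroup A] {c : PathCocycle (UnordConfigSpace ℂ k) A}
  {f g : UnordConfigSpace ℂ k → A}

theorem potential_sub_eq_swap_mul (hc : c.VanishesOnHalfTwists)
    (hf : c.IsPotentialOn (separatedConfigs u k) f) (hg : c.IsPotentialOn (separatedConfigs v k) g)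
    (h : IsDualPair u v α β) (hp : (p i : ℕ) = p j + 1) :
    f (.mk ⟨_, h.permTuple_injective p⟩) - g (.mk ⟨_, h.permTuple_injective p⟩) =
      f (.mk ⟨_, h.permTuple_injective (Equiv.swap (p i) (p j) * p)⟩) -
        g (.mk ⟨_, h.permTuple_injective (Equiv.swap (p i) (p j) * p)⟩) := by
  have hij : i ≠ j := by rintro rfl; omega
  have hij' : ((i : ℕ) : ℝ) ≠ (j : ℕ) := by exact_mod_cast Fin.val_injective.ne hij
  have compl_subset : ({i, j} : Set (Fin k))ᶜ ⊆ {i}ᶜ := by simp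
  have hleft : u ((((p i : ℕ) - (p j : ℕ) : ℝ) / 2) • α) = 1 / 2 := by
    rw [map_smul, h.left_left, hp]
    push_cast
    rw [smul_eq_mul]
    ring
  have hright : v ((((i : ℕ) - (j : ℕ) : ℝ) / 2) • β) = ((i : ℕ) - (j : ℕ)) / 2 := by
    rw [map_smul, h.right_right, smul_eq_mul, mul_one]
  have crossing := PathCocycle.potential_sub_eq_of_crossing hc hij (u := u) (v := v)
    (α := (((p i : ℕ) - (p j : ℕ) : ℝ) / 2) • α) (β := (((i : ℕ) - (j : ℕ) : ℝ) / 2) • β)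
    (w := ⟨_, h.midpointTuple_injective hp⟩)
    (by rw [map_smul, h.left_right, smul_zero]) (by rw [hleft]; norm_num)
    (by rw [map_smul, h.right_left, smul_zero])
    (by rw [hright]; exact div_ne_zero (sub_ne_zero.2 hij') two_ne_zero)
    (h.injOn_left_midpointTuple.mono compl_subset) ?_
    (h.injOn_right_midpointTuple.mono compl_subset) ?_ hf hg
    (by rw [pairAround_midpointTuple hij]; exact h.permTuple_injective p)
    (by rw [pairAround_midpointTuple_swap hij]; exact h.permTuple_injective _)
  · simpa only [pairAround_midpointTuple hij, pairAround_midpointTuple_swap hij] using crossing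
  · intro l hi hj
    rw [hleft, map_sub, h.left_midpointTuple hi, h.left_midpointTuple_self hp,
      abs_of_pos one_half_pos]
    exact half_lt_abs_natCast_sub (Fin.val_injective.ne (p.injective.ne hj))
      (hp ▸ Fin.val_injective.ne (p.injective.ne hi))
  · intro l hi hj
    rw [hright, h.right_midpointTuple hi, h.right_midpointTuple_self]
    have hi' : ((l : ℕ) : ℝ) ≠ (i : ℕ) := by exact_mod_cast Fin.val_injective.ne hi
    have hj' : ((l : ℕ) : ℝ) ≠ (j : ℕ) := by exact_mod_cast Fin.val_injective.ne hj
    exact ⟨fun heq => hi' (by linarith), fun heq => hj' (by linarith)⟩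

lemma potential_sub_eq_one (hc : c.VanishesOnHalfTwists)
    (hf : c.IsPotentialOn (separatedConfigs u k) f) (hg : c.IsPotentialOn (separatedConfigs v k) g)
    (h : IsDualPair u v α β) (p : Equiv.Perm (Fin k)) :
    f (.mk ⟨_, h.permTuple_injective p⟩) - g (.mk ⟨_, h.permTuple_injective p⟩) =
      f (.mk ⟨_, h.permTuple_injective 1⟩) - g (.mk ⟨_, h.permTuple_injective 1⟩) := by
  cases k with
  | zero => rw [Subsingleton.elim p 1]
  | succ n =>
    have hp : p ∈ Submonoid.closure (Set.range fun m : Fin n => Equiv.swap m.castSucc m.succ) := by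
      rw [Equiv.Perm.mclosure_swap_castSucc_succ]
      trivial
    induction hp using Submonoid.closure_induction_left with
    | one => rfl
    | mul_left _ hx p _ ih =>
      obtain ⟨m, rfl⟩ := hx
      have step := potential_sub_eq_swap_mul hc hf hg h (p := p) (i := p⁻¹ m.succ)
        (j := p⁻¹ m.castSucc) (by simp)
      simp only [Equiv.Perm.coe_inv, Equiv.apply_symm_apply, Equiv.swap_comm m.succ] at step
      rw [← ih, step]

end Transposition

section TiltedRe

variable {k : ℕ} {A : Type*} [AddCommGroup A] {a b : ℝ}

/-- The functional `z ↦ re z + a * im z`. -/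
noncomputable def tiltedRe (a : ℝ) : ℂ →L[ℝ] ℝ := Complex.reCLM + a • Complex.imCLM

lemma tiltedRe_apply (a : ℝ) (z : ℂ) : tiltedRe a z = z.re + a * z.im := rfl

lemma isDualPair_tiltedRe (hab : a ≠ b) :
    IsDualPair (tiltedRe a) (tiltedRe b) (⟨-b / (a - b), 1 / (a - b)⟩ : ℂ)
      (⟨a / (a - b), -1 / (a - b)⟩ : ℂ) := by
  have : a - b ≠ 0 := sub_ne_zero.2 hab
  constructor <;> rw [tiltedRe_apply] <;> field_simp <;> ring

lemma eq_of_tiltedRe_eq (hab : a ≠ b) {z w : ℂ} (ha : tiltedRe a z = tiltedRe a w)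
    (hb : tiltedRe b z = tiltedRe b w) : z = w := by
  rw [tiltedRe_apply, tiltedRe_apply] at ha hb
  have him : z.im = w.im := mul_left_cancel₀ (sub_ne_zero.2 hab) (by linarith)
  exact Complex.ext (by rw [him] at ha; linarith) him

lemma exists_mem_separatedConfigs_tiltedRe (x : UnordConfigSpace ℂ k) :
    ∃ a, x ∈ separatedConfigs (tiltedRe a) k := by
  obtain ⟨z, rfl⟩ := UnordConfigSpace.mk_surjective x
  have finite_bad :
      (⋃ i, ⋃ j, {a : ℝ | i ≠ j ∧ tiltedRe a (z.1 i) = tiltedRe a (z.1 j)}).Finite := by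
    refine Set.finite_iUnion fun i => Set.finite_iUnion fun j => Set.Subsingleton.finite ?_
    rintro a ⟨hne, ha⟩ b ⟨-, hb⟩
    by_contra hab
    exact hne (z.2 (eq_of_tiltedRe_eq hab ha hb))
  obtain ⟨a, -, ha⟩ := (Set.infinite_univ (α := ℝ)).exists_notMem_finite finite_bad
  refine ⟨a, mk_mem_separatedConfigs.2 fun i j hij => ?_⟩
  by_contra hne
  exact ha (Set.mem_iUnion₂.2 ⟨i, j, hne, hij⟩)

theorem PathCocycle.exists_potential_of_vanishesOnHalfTwists
    {c : PathCocycle (UnordConfigSpace ℂ k) A} (hc : c.VanishesOnHalfTwists) :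
    ∃ f, c.IsPotentialOn Set.univ f := by
  have one_pos (a : ℝ) : 0 < tiltedRe a 1 := by simp [tiltedRe_apply]
  choose f hf using fun a => c.exists_potential_separatedConfigs (one_pos a)
  refine c.exists_potential_of_openCover
    (fun a => (isOpenEmbedding_sortedChart (tiltedRe a) k).isOpen_range)
    exists_mem_separatedConfigs_tiltedRe hf ?_ fun a b d => ?_
  · rintro a b x ⟨hxa, hxb⟩ y ⟨hya, hyb⟩
    rcases eq_or_ne a b with rfl | hab
    · rw [sub_self, sub_self]
    have h := isDualPair_tiltedRe hab
    obtain ⟨p, hp⟩ := exists_perm_potential_sub_eq (hf a) (hf b) h hxa hxb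
    obtain ⟨q, hq⟩ := exists_perm_potential_sub_eq (hf a) (hf b) h hya hyb
    rw [hp, hq, potential_sub_eq_one hc (hf a) (hf b) h p,
      potential_sub_eq_one hc (hf a) (hf b) h q]
  · have mem (a : ℝ) : .mk ⟨_, injective_of_mem_sortedTuples (smul_mem_sortedTuples (one_pos 0))⟩ ∈
        separatedConfigs (tiltedRe a) k := ⟨⟨_, smul_mem_sortedTuples (one_pos a)⟩, rfl⟩
    exact ⟨_, ⟨mem a, mem b⟩, mem d⟩

end TiltedRe

/-! ### The discriminant -/

section OffDiagProd

variable {ι R : Type*} [Fintype ι] [DecidableEq ι] [CommMonoid R]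

/-- The product of the entries of a square matrix off the diagonal. For `d x y = z x - z y` this
is, up to sign, the discriminant of the monic polynomial with roots `z`. -/
def offDiagProd (d : ι → ι → R) : R := ∏ x, ∏ y, if x = y then 1 else d x y

lemma offDiagProd_perm (d : ι → ι → R) (τ : Equiv.Perm ι) :
    offDiagProd (fun x y => d (τ x) (τ y)) = offDiagProd d := by
  refine Fintype.prod_equiv τ _ _ fun x => Fintype.prod_equiv τ _ _ fun y => ?_
  simp only [τ.injective.eq_iff]

lemma offDiagProd_ne_zero {R : Type*} [CommMonoidWithZero R] [NoZeroDivisors R] [Nontrivial R]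
    {d : ι → ι → R} (h : ∀ x y, x ≠ y → d x y ≠ 0) : offDiagProd d ≠ 0 := by
  refine Finset.prod_ne_zero_iff.2 fun x _ => Finset.prod_ne_zero_iff.2 fun y _ => ?_
  split_ifs with hxy
  · exact one_ne_zero
  · exact h x y hxy

lemma continuous_offDiagProd {T : Type*} [TopologicalSpace T] [TopologicalSpace R] [ContinuousMul R]
    {d : T → ι → ι → R} (h : ∀ x y, Continuous fun t => d t x y) :
    Continuous fun t => offDiagProd (d t) := by
  refine continuous_finsetProd _ fun x _ => continuous_finsetProd _ fun y _ => ?_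
  split_ifs
  · exact continuous_const
  · exact h x y

lemma offDiagProd_succ {k : ℕ} (d : Fin (k + 1) → Fin (k + 1) → R) :
    offDiagProd d = (∏ l : Fin k, d 0 l.succ * d l.succ 0) *
      offDiagProd fun x y : Fin k => d x.succ y.succ := by
  simp only [offDiagProd, Fin.prod_univ_succ, Fin.succ_inj, if_true, one_mul,
    (Fin.succ_ne_zero _).symm, Fin.succ_ne_zero, if_false, Finset.prod_mul_distrib, mul_assoc]
  rw [mul_left_comm]

lemma offDiagProd_mul (d e : ι → ι → R) :
    offDiagProd (fun x y => d x y * e x y) = offDiagProd d * offDiagProd e := by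
  simp only [offDiagProd, ← Finset.prod_mul_distrib, ite_mul_ite, one_mul]

lemma offDiagProd_left (a : ι → R) :
    offDiagProd (fun x _ => a x) = (∏ x, a x) ^ (Fintype.card ι - 1) := by
  simp only [offDiagProd, ← Finset.prod_pow, Finset.prod_ite, Finset.prod_const, one_pow, one_mul,
    Finset.filter_ne, Finset.card_erase_of_mem (Finset.mem_univ _), Finset.card_univ]

lemma offDiagProd_right (a : ι → R) :
    offDiagProd (fun _ y => a y) = (∏ x, a x) ^ (Fintype.card ι - 1) := by
  rw [← offDiagProd_left, offDiagProd, Finset.prod_comm]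
  simp only [offDiagProd, eq_comm]

lemma offDiagProd_mul_mul (a : ι → R) (d : ι → ι → R) :
    offDiagProd (fun x y => a x * a y * d x y) =
      (∏ x, a x) ^ (2 * (Fintype.card ι - 1)) * offDiagProd d := by
  rw [offDiagProd_mul (fun x y => a x * a y) d, offDiagProd_mul (fun x _ => a x) fun _ y => a y,
    offDiagProd_left, offDiagProd_right, two_mul, pow_add]

end OffDiagProd

/-- The discriminant of a tuple of complex numbers, up to sign. -/
noncomputable def tupleDiscr {ι : Type*} [Fintype ι] [DecidableEq ι] (z : ι → ℂ) : ℂ :=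
  offDiagProd fun x y => z x - z y

lemma tupleDiscr_ne_zero {ι : Type*} [Fintype ι] [DecidableEq ι] {z : ι → ℂ}
    (hz : Function.Injective z) : tupleDiscr z ≠ 0 :=
  offDiagProd_ne_zero fun _ _ hxy => sub_ne_zero.2 (hz.ne hxy)

/-- The discriminant as a nowhere vanishing function of an unordered configuration. -/
noncomputable def configDiscr (k : ℕ) : C(UnordConfigSpace ℂ k, {z : ℂ // z ≠ 0}) where
  toFun := Quotient.lift
    (fun f : OrdConfigSpace ℂ k => ⟨tupleDiscr f.1, tupleDiscr_ne_zero f.2⟩) <| by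
      rintro f ⟨_, hg⟩ ⟨τ, rfl⟩
      exact Subtype.ext (offDiagProd_perm (fun x y => f.1 x - f.1 y) τ).symm
  continuous_toFun := by
    refine Continuous.quotient_lift (Continuous.subtype_mk ?_ _) _
    exact continuous_offDiagProd fun x y => ((continuous_apply x).comp continuous_subtype_val).sub
      ((continuous_apply y).comp continuous_subtype_val)

/-! ### Winding numbers -/

/-- The path `f` in `ℂ ∖ {0}` has a continuous logarithm which increases by `n * 2πi`. -/
def HasWinding (f : I → ℂ) (n : ℤ) : Prop :=
  ∃ ℓ : C(I, ℂ), (∀ t, f t = Complex.exp (ℓ t)) ∧ ℓ 1 = ℓ 0 + n * (2 * Real.pi * Complex.I)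

namespace HasWinding

lemma const {a : ℂ} (ha : a ≠ 0) : HasWinding (fun _ => a) 0 :=
  ⟨.const I (Complex.log a), fun _ => (Complex.exp_log ha).symm, by simp⟩

lemma mul {f g : I → ℂ} {m n : ℤ} (hf : HasWinding f m) (hg : HasWinding g n) :
    HasWinding (fun t => f t * g t) (m + n) := by
  obtain ⟨ℓ, hℓ, hm⟩ := hf
  obtain ⟨ℓ', hℓ', hn⟩ := hg
  refine ⟨ℓ + ℓ', fun t => ?_, ?_⟩
  · simp only [hℓ, hℓ', ContinuousMap.add_apply, Complex.exp_add]
  · simp only [ContinuousMap.add_apply, hm, hn, Int.cast_add]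
    ring

lemma const_mul {f : I → ℂ} {n : ℤ} (hf : HasWinding f n) {a : ℂ} (ha : a ≠ 0) :
    HasWinding (fun t => a * f t) n := by
  simpa only [zero_add] using (const ha).mul hf

lemma prod {ι : Type*} {f : ι → I → ℂ} {n : ι → ℤ} (s : Finset ι)
    (h : ∀ l ∈ s, HasWinding (f l) (n l)) :
    HasWinding (fun t => ∏ l ∈ s, f l t) (∑ l ∈ s, n l) := by
  classical
  induction s using Finset.induction_on with
  | empty => simpa using const one_ne_zero
  | insert l s hl ih =>
    simp only [Finset.prod_insert hl, Finset.sum_insert hl]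
    exact (h l (s.mem_insert_self l)).mul (ih fun i hi => h i (Finset.mem_insert_of_mem hi))

end HasWinding

lemma hasWinding_const_sub {a : ℂ} {u : C(I, ℂ)} (hloop : u 0 = u 1) (hu : ∀ t, ‖u t‖ < ‖a‖) :
    HasWinding (fun t => a - u t) 0 := by
  have ha : a ≠ 0 := norm_pos_iff.1 ((norm_nonneg _).trans_lt (hu 0))
  have mem (t : I) : 1 - u t / a ∈ Complex.slitPlane := by
    rw [sub_eq_add_neg]
    refine Complex.mem_slitPlane_of_norm_lt_one ?_
    rw [norm_neg, norm_div, div_lt_one (norm_pos_iff.2 ha)]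
    exact hu t
  refine ⟨⟨fun t => Complex.log a + Complex.log (1 - u t / a),
    continuous_const.add (.clog (by fun_prop) mem)⟩, fun t => ?_, by simp [hloop]⟩
  simp only [ContinuousMap.coe_mk, Complex.exp_add, Complex.exp_log ha,
    Complex.exp_log (Complex.slitPlane_ne_zero (mem t)), mul_sub, mul_one, mul_div_cancel₀ _ ha]

/-- The unit circle `t ↦ exp (2πit)`. -/
noncomputable def fullTurn : C(I, ℂ) :=
  ⟨fun t => Complex.exp (t * (2 * Real.pi * Complex.I)), by fun_prop⟩

lemma fullTurn_zero : fullTurn 0 = 1 := by simp [fullTurn]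

lemma fullTurn_one : fullTurn 1 = 1 := by simp [fullTurn]

lemma norm_fullTurn (t : I) : ‖fullTurn t‖ = 1 := by
  rw [fullTurn, ContinuousMap.coe_mk, Complex.norm_exp]
  simp

lemma halfTurn_one_sq (t : I) : halfTurn 1 t ^ 2 = fullTurn t := by
  simp only [halfTurn, fullTurn, ContinuousMap.coe_mk, one_mul, ← Complex.exp_nat_mul]
  congr 1
  push_cast
  ring

lemma hasWinding_fullTurn : HasWinding fullTurn 1 :=
  ⟨⟨fun t => t * (2 * Real.pi * Complex.I), by fun_prop⟩, fun _ => rfl, by simp⟩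

lemma hasWinding_mul_fullTurn_sub {R a : ℂ} (h : ‖a‖ < ‖R‖) :
    HasWinding (fun t => R * fullTurn t - a) 1 := by
  have ne (t : I) : fullTurn t ≠ 0 := Complex.exp_ne_zero _
  let u : C(I, ℂ) := ⟨fun t => a * (fullTurn t)⁻¹, by fun_prop (disch := exact ne _)⟩
  have hu : HasWinding (fun t => R - u t) 0 :=
    hasWinding_const_sub (by simp [u, fullTurn_zero, fullTurn_one]) fun t => by
      simpa [u, norm_fullTurn] using h
  convert add_zero (1 : ℤ) ▸ hasWinding_fullTurn.mul hu using 2 with t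
  simp only [u, ContinuousMap.coe_mk]
  field_simp [ne t]

/-! ### One point encircling the others -/

/-- The points `0, 1, …, m + 1`. -/
noncomputable def lineConfig (m : ℕ) : OrdConfigSpace ℂ (m + 2) :=
  ⟨fun l => (l : ℕ), Nat.cast_injective.comp Fin.val_injective⟩

lemma isTwistRadius_lineConfig (m : ℕ) : IsTwistRadius (lineConfig m).1 0 1 1 := by
  refine ⟨one_ne_zero, fun l h0 h1 => ?_⟩
  have hl : 1 < (l : ℕ) := by
    have h0' : (l : ℕ) ≠ 0 := fun h => h0 (Fin.ext h)
    have h1' : (l : ℕ) ≠ 1 := fun h => h1 (Fin.ext h)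
    omega
  simpa [lineConfig] using hl

/-- The half-twist of the points `±1` in the configuration `±1, 2, …, m + 1`. -/
noncomputable def standardHalfTwist (m : ℕ) : C(I, UnordConfigSpace ℂ (m + 2)) :=
  halfTwist (lineConfig m) zero_ne_one (isTwistRadius_lineConfig m)

/-- The labelled points of the standard half-twist. -/
noncomputable def standardHalfTwistTuple (m : ℕ) (t : I) : Fin (m + 2) → ℂ :=
  pairAround (lineConfig m).1 0 1 (halfTurn 1 t)

lemma standardHalfTwistTuple_zero (m : ℕ) (t : I) :
    standardHalfTwistTuple m t 0 = halfTurn 1 t := by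
  simp [standardHalfTwistTuple, pairAround_left, lineConfig]

lemma standardHalfTwistTuple_one (m : ℕ) (t : I) :
    standardHalfTwistTuple m t 1 = -halfTurn 1 t := by
  simp [standardHalfTwistTuple, pairAround_right zero_ne_one, lineConfig]

lemma standardHalfTwistTuple_succ_succ (m : ℕ) (t : I) (l : Fin m) :
    standardHalfTwistTuple m t l.succ.succ = (l + 2 : ℕ) := by
  rw [standardHalfTwistTuple,
    pairAround_of_ne (Fin.succ_ne_zero _) fun h => by simpa using congrArg Fin.val h]
  simp [lineConfig, add_assoc, one_add_one_eq_two]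

lemma standardHalfTwist_zero_eq_one (m : ℕ) : standardHalfTwist m 0 = standardHalfTwist m 1 := by
  refine UnordConfigSpace.mk_eq_mk.2 ⟨Equiv.swap 0 1, ?_⟩
  refine (pairAround_comp_swap zero_ne_one _ _).trans ?_
  rw [halfTurn_zero]
  exact congrArg _ (halfTurn_one 1).symm

lemma tupleDiscr_standardHalfTwistTuple (m : ℕ) (t : I) :
    tupleDiscr (standardHalfTwistTuple m t) =
      (-4 * tupleDiscr fun l : Fin m => ((l + 2 : ℕ) : ℂ)) * (fullTurn t *
        ∏ l : Fin m, (((l + 2 : ℕ) : ℂ) ^ 2 - fullTurn t) *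
          (((l + 2 : ℕ) : ℂ) ^ 2 - fullTurn t)) := by
  set E := halfTurn 1 t with hE
  have factor (l : Fin m) : (((l + 2 : ℕ) : ℂ) ^ 2 - E ^ 2) * (((l + 2 : ℕ) : ℂ) ^ 2 - E ^ 2) =
      (E - (l + 2 : ℕ)) * ((l + 2 : ℕ) - E) * ((-E - (l + 2 : ℕ)) * ((l + 2 : ℕ) - -E)) := by ring
  rw [← halfTurn_one_sq, ← hE, Finset.prod_congr rfl fun l _ => factor l, Finset.prod_mul_distrib]
  simp only [tupleDiscr, offDiagProd_succ, Fin.prod_univ_succ, standardHalfTwistTuple_zero,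
    Fin.succ_zero_eq_one, standardHalfTwistTuple_one, standardHalfTwistTuple_succ_succ, ← hE]
  ring

lemma hasWinding_tupleDiscr_standardHalfTwistTuple (m : ℕ) :
    HasWinding (fun t => tupleDiscr (standardHalfTwistTuple m t)) 1 := by
  have hfactor (l : Fin m) : HasWinding (fun t => ((l + 2 : ℕ) : ℂ) ^ 2 - fullTurn t) 0 := by
    refine hasWinding_const_sub (fullTurn_zero.trans fullTurn_one.symm) fun t => ?_
    rw [norm_fullTurn, norm_pow, Complex.norm_natCast]
    exact one_lt_pow₀ (by exact_mod_cast (by omega : 1 < (l : ℕ) + 2)) two_ne_zero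
  have hne : -4 * tupleDiscr (fun l : Fin m => ((l + 2 : ℕ) : ℂ)) ≠ 0 :=
    mul_ne_zero (by norm_num) <| tupleDiscr_ne_zero fun x y hxy => Fin.ext (by simpa using hxy)
  simp only [tupleDiscr_standardHalfTwistTuple]
  simpa using (hasWinding_fullTurn.mul
    (HasWinding.prod Finset.univ fun l _ => (hfactor l).mul (hfactor l))).const_mul hne

/-- The points `1, …, m + 1`, together with a point labelled `0` which moves once around the circle
of radius `m + 2`. -/
noncomputable def encirclingTuple (m : ℕ) (t : I) : Fin (m + 2) → ℂ :=
  Fin.cons ((m + 2 : ℕ) * fullTurn t) fun l : Fin (m + 1) => ((l + 1 : ℕ) : ℂ)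

lemma encirclingTuple_zero (m : ℕ) (t : I) :
    encirclingTuple m t 0 = (m + 2 : ℕ) * fullTurn t := rfl

lemma encirclingTuple_succ (m : ℕ) (t : I) (l : Fin (m + 1)) :
    encirclingTuple m t l.succ = (l + 1 : ℕ) := rfl

lemma norm_encirclingTuple_succ_lt (m : ℕ) (t : I) (l : Fin (m + 1)) :
    ‖encirclingTuple m t l.succ‖ < ‖encirclingTuple m t 0‖ := by
  rw [encirclingTuple_zero, encirclingTuple_succ, norm_mul, norm_fullTurn, mul_one,
    Complex.norm_natCast, Complex.norm_natCast]
  exact_mod_cast (by omega : (l : ℕ) + 1 < m + 2)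

lemma encirclingTuple_injective (m : ℕ) (t : I) : Function.Injective (encirclingTuple m t) := by
  refine Fin.cons_injective_iff.2 ⟨?_, fun x y hxy => Fin.ext (by simpa using hxy)⟩
  rintro ⟨l, hl⟩
  exact (norm_encirclingTuple_succ_lt m t l).ne (congrArg norm hl)

lemma continuous_encirclingTuple (m : ℕ) : Continuous (encirclingTuple m) :=
  .finCons (by fun_prop) continuous_const

/-- The loop of unordered configurations in which one point encircles all the others. -/
noncomputable def encirclingLoop (m : ℕ) : C(I, UnordConfigSpace ℂ (m + 2)) :=
  UnordConfigSpace.ofFamily (encirclingTuple m) (continuous_encirclingTuple m)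
    (encirclingTuple_injective m)

lemma encirclingTuple_zero_eq_one (m : ℕ) : encirclingTuple m 0 = encirclingTuple m 1 := by
  simp only [encirclingTuple, fullTurn_zero, fullTurn_one]

lemma tupleDiscr_encirclingTuple (m : ℕ) (t : I) :
    tupleDiscr (encirclingTuple m t) = (tupleDiscr fun l : Fin (m + 1) => ((l + 1 : ℕ) : ℂ)) *
      ∏ l : Fin (m + 1), -1 * (((m + 2 : ℕ) * fullTurn t - (l + 1 : ℕ)) *
        ((m + 2 : ℕ) * fullTurn t - (l + 1 : ℕ))) := by
  rw [tupleDiscr, offDiagProd_succ, mul_comm]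
  congr 1
  refine Finset.prod_congr rfl fun l _ => ?_
  rw [encirclingTuple_zero, encirclingTuple_succ]
  ring

lemma hasWinding_tupleDiscr_encirclingTuple (m : ℕ) :
    HasWinding (fun t => tupleDiscr (encirclingTuple m t)) (2 * m + 2 : ℕ) := by
  have hfactor (l : Fin (m + 1)) :
      HasWinding (fun t => ((m + 2 : ℕ) : ℂ) * fullTurn t - (l + 1 : ℕ)) 1 := by
    refine hasWinding_mul_fullTurn_sub ?_
    rw [Complex.norm_natCast, Complex.norm_natCast]
    exact_mod_cast (by omega : (l : ℕ) + 1 < m + 2)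
  have hne : tupleDiscr (fun l : Fin (m + 1) => ((l + 1 : ℕ) : ℂ)) ≠ 0 :=
    tupleDiscr_ne_zero fun x y hxy => Fin.ext (by simpa using hxy)
  simp only [tupleDiscr_encirclingTuple]
  convert (HasWinding.prod Finset.univ fun l _ =>
    ((hfactor l).mul (hfactor l)).const_mul (neg_ne_zero.2 one_ne_zero)).const_mul hne using 1
  simp
  ring

lemma exists_discrWindingCocycle (k : ℕ) : ∃ w : PathCocycle (UnordConfigSpace ℂ k) ℤ,
    ∀ γ n, HasWinding (fun t => configDiscr k (γ t)) n → w γ = n := by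
  obtain ⟨w, hw⟩ := exists_windingCocycle
  refine ⟨w.comap (configDiscr k), fun γ n h => ?_⟩
  obtain ⟨ℓ, hℓ, hn⟩ := h
  exact hw ℓ _ n hℓ hn

-- Up to a potential, a cocycle is a multiple of the winding number of the discriminant.
theorem PathCocycle.map_encirclingLoop {A : Type*} [AddCommGroup A] {m : ℕ}
    (c : PathCocycle (UnordConfigSpace ℂ (m + 2)) A) :
    c (encirclingLoop m) = (2 * m + 2) • c (standardHalfTwist m) := by
  obtain ⟨w, hw⟩ := exists_discrWindingCocycle (m + 2)
  have twist : w (standardHalfTwist m) = 1 :=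
    hw _ _ (hasWinding_tupleDiscr_standardHalfTwistTuple m)
  have encircling : w (encirclingLoop m) = (2 * m + 2 : ℕ) :=
    hw _ _ (hasWinding_tupleDiscr_encirclingTuple m)
  let d := c.subSMul w (c (standardHalfTwist m))
  have hd : d.VanishesOnHalfTwists := by
    intro z i j hij ρ h
    rw [d.halfTwist_eq_halfTwist hij zero_ne_one h (isTwistRadius_lineConfig m)]
    change c (standardHalfTwist m) - w (standardHalfTwist m) • c (standardHalfTwist m) = 0
    rw [twist, one_smul, sub_self]
  obtain ⟨f, hf⟩ := exists_potential_of_vanishesOnHalfTwists hd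
  have hloop : encirclingLoop m 0 = encirclingLoop m 1 :=
    congrArg UnordConfigSpace.mk (Subtype.ext (encirclingTuple_zero_eq_one m))
  have key : c (encirclingLoop m) - w (encirclingLoop m) • c (standardHalfTwist m) = 0 :=
    (hf (encirclingLoop m) fun _ => trivial).trans (by rw [hloop, sub_self])
  rwa [encircling, natCast_zsmul, sub_eq_zero] at key

/-! ### The sphere as the complex projective line -/

open scoped ComplexConjugate in
/-- The Hopf map `ℂ² ∖ {0} → S²`, sending `v` to the point with homogeneous coordinates
`[v.1 : v.2]`, as a vector of `ℝ³`. It takes the value `0` at `v = 0`. -/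
noncomputable def hopfVec (v : ℂ × ℂ) : EuclideanSpace ℝ (Fin 3) :=
  (Complex.normSq v.1 + Complex.normSq v.2)⁻¹ •
    !₂[2 * (v.1 * conj v.2).re, 2 * (v.1 * conj v.2).im, Complex.normSq v.1 - Complex.normSq v.2]

lemma normSq_add_normSq_pos {v : ℂ × ℂ} (hv : v ≠ 0) :
    0 < Complex.normSq v.1 + Complex.normSq v.2 := by
  rcases v with ⟨a, b⟩
  by_cases ha : a = 0
  · have hb : b ≠ 0 := fun hb => hv (Prod.ext ha hb)
    exact add_pos_of_nonneg_of_pos (Complex.normSq_nonneg a) (Complex.normSq_pos.2 hb)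
  · exact add_pos_of_pos_of_nonneg (Complex.normSq_pos.2 ha) (Complex.normSq_nonneg b)

lemma norm_hopfVec_sq {v : ℂ × ℂ} (hv : v ≠ 0) : ‖hopfVec v‖ ^ 2 = 1 := by
  have := (normSq_add_normSq_pos hv).ne'
  simp only [hopfVec, EuclideanSpace.norm_sq_eq, Fin.sum_univ_three, PiLp.smul_apply, smul_eq_mul,
    Real.norm_eq_abs, sq_abs, Matrix.cons_val]
  field_simp
  simp only [Complex.normSq_apply, Complex.mul_re, Complex.mul_im, Complex.conj_re, Complex.conj_im]
  ring

/-- The determinant of the two vectors `v` and `w`. -/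
def det₂ (v w : ℂ × ℂ) : ℂ := v.1 * w.2 - v.2 * w.1

lemma norm_hopfVec_sub_sq {v w : ℂ × ℂ} (hv : v ≠ 0) (hw : w ≠ 0) :
    ‖hopfVec v - hopfVec w‖ ^ 2 = 4 * Complex.normSq (det₂ v w) /
      ((Complex.normSq v.1 + Complex.normSq v.2) * (Complex.normSq w.1 + Complex.normSq w.2)) := by
  have hv' := (normSq_add_normSq_pos hv).ne'
  have hw' := (normSq_add_normSq_pos hw).ne'
  rw [norm_sub_sq_real, norm_hopfVec_sq hv, norm_hopfVec_sq hw]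
  simp only [hopfVec, PiLp.inner_apply, Fin.sum_univ_three, PiLp.smul_apply, smul_eq_mul,
    Matrix.cons_val, RCLike.inner_apply, conj_trivial]
  field_simp
  simp only [det₂, Complex.normSq_apply, Complex.mul_re, Complex.mul_im, Complex.conj_re,
    Complex.conj_im, Complex.sub_re, Complex.sub_im]
  ring

/-- The unit sphere in `ℝ³`. -/
abbrev TwoSphere : Type := Metric.sphere (0 : EuclideanSpace ℝ (Fin 3)) 1

/-- The Hopf map `ℂ² ∖ {0} → S²`. -/
noncomputable def hopf (v : {v : ℂ × ℂ // v ≠ 0}) : TwoSphere :=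
  ⟨hopfVec v.1, by
    rw [mem_sphere_zero_iff_norm, ← sq_eq_sq₀ (norm_nonneg _) zero_le_one, norm_hopfVec_sq v.2,
      one_pow]⟩

lemma continuous_hopf : Continuous hopf := by
  refine Continuous.subtype_mk (Continuous.smul (f := fun v : {v : ℂ × ℂ // v ≠ 0} => _)
    (Continuous.inv₀ ?_ fun v => (normSq_add_normSq_pos v.2).ne')
    ((PiLp.continuous_toLp 2 _).comp (continuous_pi fun i => ?_))) _
  · fun_prop
  · fin_cases i <;> dsimp <;> fun_prop

lemma hopf_eq_hopf_iff {v w : {v : ℂ × ℂ // v ≠ 0}} : hopf v = hopf w ↔ det₂ v.1 w.1 = 0 := by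
  have hpos := mul_pos (normSq_add_normSq_pos v.2) (normSq_add_normSq_pos w.2)
  rw [Subtype.ext_iff, ← sub_eq_zero, ← norm_eq_zero, ← sq_eq_zero_iff (a := ‖_‖)]
  change ‖hopfVec v.1 - hopfVec w.1‖ ^ 2 = 0 ↔ _
  rw [norm_hopfVec_sub_sq v.2 w.2, div_eq_zero_iff, or_iff_left hpos.ne', mul_eq_zero,
    or_iff_right four_ne_zero, Complex.normSq_eq_zero]

/-- The nonzero vector `v` consists of homogeneous coordinates of the point `p` of the sphere. -/
def IsHomogeneousCoord (v : ℂ × ℂ) (p : TwoSphere) : Prop := ∃ h : v ≠ 0, hopf ⟨v, h⟩ = p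

lemma IsHomogeneousCoord.eq_iff {v w : ℂ × ℂ} {p q : TwoSphere} (hv : IsHomogeneousCoord v p)
    (hw : IsHomogeneousCoord w q) : p = q ↔ det₂ v w = 0 := by
  obtain ⟨_, rfl⟩ := hv
  obtain ⟨_, rfl⟩ := hw
  exact hopf_eq_hopf_iff

lemma exists_eq_smul_of_det₂_eq_zero {v w : ℂ × ℂ} (hv : v ≠ 0) (h : det₂ v w = 0) :
    ∃ c : ℂ, w = c • v := by
  obtain ⟨a, b⟩ := v
  obtain ⟨x, y⟩ := w
  rw [det₂, sub_eq_zero] at h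
  by_cases ha : a = 0
  · have hb : b ≠ 0 := fun hb => hv (Prod.ext ha hb)
    have hx : x = 0 := by simpa [ha, hb] using h
    exact ⟨y / b, by simp [ha, hb, hx]⟩
  · refine ⟨x / a, Prod.ext (by simp [ha]) ?_⟩
    change y = x / a * b
    rw [div_mul_eq_mul_div, eq_div_iff ha, mul_comm y, mul_comm x]
    exact h

/-- Homogeneous coordinates of `p`, valid away from the point `[0 : 1]`. -/
noncomputable def northLift (p : TwoSphere) : ℂ × ℂ := ((1 + p.1 2 : ℝ), p.1 0 - p.1 1 * Complex.I)

/-- Homogeneous coordinates of `p`, valid away from the point `[1 : 0]`. -/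
noncomputable def southLift (p : TwoSphere) : ℂ × ℂ := (p.1 0 + p.1 1 * Complex.I, (1 - p.1 2 : ℝ))

lemma continuous_northLift : Continuous northLift := by
  unfold northLift; fun_prop

lemma continuous_southLift : Continuous southLift := by
  unfold southLift; fun_prop

lemma sum_sq_coord (p : TwoSphere) : p.1 0 ^ 2 + p.1 1 ^ 2 + p.1 2 ^ 2 = 1 := by
  have h : ‖p.1‖ ^ 2 = 1 := by rw [mem_sphere_zero_iff_norm.1 p.2, one_pow]
  rw [EuclideanSpace.norm_sq_eq] at h
  simpa [Fin.sum_univ_three] using h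

lemma isHomogeneousCoord_northLift {p : TwoSphere} (hp : 1 + p.1 2 ≠ 0) :
    IsHomogeneousCoord (northLift p) p := by
  have hsq := sum_sq_coord p
  refine ⟨fun h => hp (by simpa [northLift] using congrArg (fun v => v.1.re) h), ?_⟩
  ext i
  have hnorm : (1 + p.1 2) * (1 + p.1 2) + (p.1 0 * p.1 0 + p.1 1 * p.1 1) = 2 * (1 + p.1 2) := by
    linear_combination hsq
  fin_cases i <;>
    simp [hopf, hopfVec, northLift, Complex.normSq_apply, hnorm] <;> field_simp
  linear_combination -hsq

lemma isHomogeneousCoord_southLift {p : TwoSphere} (hp : 1 - p.1 2 ≠ 0) :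
    IsHomogeneousCoord (southLift p) p := by
  have hsq := sum_sq_coord p
  refine ⟨fun h => hp (by simpa [southLift] using congrArg (fun v => v.2.re) h), ?_⟩
  ext i
  have hnorm : p.1 0 * p.1 0 + p.1 1 * p.1 1 + (1 - p.1 2) * (1 - p.1 2) = 2 * (1 - p.1 2) := by
    linear_combination hsq
  fin_cases i <;>
    simp [hopf, hopfVec, southLift, Complex.normSq_apply, hnorm] <;> field_simp
  linear_combination hsq

lemma exists_local_isHomogeneousCoord (p : TwoSphere) : ∃ v : TwoSphere → ℂ × ℂ, Continuous v ∧
    ∀ᶠ q in 𝓝 p, IsHomogeneousCoord (v q) q := by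
  have hcoord : Continuous fun q : TwoSphere => q.1 2 := by fun_prop
  by_cases hp : 1 + p.1 2 = 0
  · have hp' : 1 - p.1 2 ≠ 0 := by linarith
    exact ⟨southLift, continuous_southLift,
      ((continuous_const.sub hcoord).continuousAt.eventually_ne hp').mono fun _ =>
        isHomogeneousCoord_southLift⟩
  · exact ⟨northLift, continuous_northLift,
      ((continuous_const.add hcoord).continuousAt.eventually_ne hp).mono fun _ =>
        isHomogeneousCoord_northLift⟩

lemma exists_isHomogeneousCoord (p : TwoSphere) : ∃ v, IsHomogeneousCoord v p := by
  obtain ⟨v, -, hv⟩ := exists_local_isHomogeneousCoord p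
  exact ⟨v p, hv.self_of_nhds⟩

/-! ### Affine charts of the sphere -/

lemma affineCoord_ne_zero (s z : ℂ) : (z, s * z + 1) ≠ 0 := fun h => by
  have hz : z = 0 := congrArg Prod.fst h
  simpa [hz] using congrArg Prod.snd h

/-- The affine chart of the sphere with image the complement of the point `[1 : s]`. -/
noncomputable def affineChart (s : ℂ) : C(ℂ, TwoSphere) :=
  ⟨fun z => hopf ⟨(z, s * z + 1), affineCoord_ne_zero s z⟩,
    continuous_hopf.comp (Continuous.subtype_mk (by fun_prop) _)⟩

lemma continuous_affineChart : Continuous fun p : ℂ × ℂ => affineChart p.1 p.2 :=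
  continuous_hopf.comp (Continuous.subtype_mk (by fun_prop) _)

/-- The point `[1 : s]` of the sphere. -/
noncomputable def missingPoint (s : ℂ) : TwoSphere :=
  hopf ⟨(1, s), fun h => one_ne_zero (congrArg Prod.fst h)⟩

lemma isHomogeneousCoord_affineChart (s z : ℂ) :
    IsHomogeneousCoord (z, s * z + 1) (affineChart s z) :=
  ⟨affineCoord_ne_zero s z, rfl⟩

lemma isHomogeneousCoord_missingPoint (s : ℂ) : IsHomogeneousCoord (1, s) (missingPoint s) :=
  ⟨_, rfl⟩

lemma affineChart_injective (s : ℂ) : Function.Injective (affineChart s) := by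
  intro z w h
  have hdet :=
    ((isHomogeneousCoord_affineChart s z).eq_iff (isHomogeneousCoord_affineChart s w)).1 h
  rw [det₂] at hdet
  linear_combination hdet

lemma missingPoint_injective : Function.Injective missingPoint := by
  intro s s' h
  have hdet :=
    ((isHomogeneousCoord_missingPoint s).eq_iff (isHomogeneousCoord_missingPoint s')).1 h
  rw [det₂] at hdet
  linear_combination -hdet

namespace IsHomogeneousCoord

variable {v : ℂ × ℂ} {p : TwoSphere}

lemma eq_missingPoint_iff (hv : IsHomogeneousCoord v p) (s : ℂ) :
    p = missingPoint s ↔ v.2 - s * v.1 = 0 := by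
  rw [hv.eq_iff (isHomogeneousCoord_missingPoint s), ← neg_eq_zero, det₂]
  ring_nf

lemma affineChart_div (hv : IsHomogeneousCoord v p) {s : ℂ} (h : v.2 - s * v.1 ≠ 0) :
    affineChart s (v.1 / (v.2 - s * v.1)) = p := by
  rw [(isHomogeneousCoord_affineChart s _).eq_iff hv, det₂]
  linear_combination div_mul_cancel₀ v.1 h

end IsHomogeneousCoord

lemma affineChart_ne_missingPoint (s z : ℂ) : affineChart s z ≠ missingPoint s := by
  rw [Ne, (isHomogeneousCoord_affineChart s z).eq_missingPoint_iff]
  simp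

lemma range_affineChart (s : ℂ) : Set.range (affineChart s) = {missingPoint s}ᶜ := by
  refine Set.Subset.antisymm ?_ fun p hp => ?_
  · rintro _ ⟨z, rfl⟩
    exact affineChart_ne_missingPoint s z
  · obtain ⟨v, hv⟩ := exists_isHomogeneousCoord p
    exact ⟨_, hv.affineChart_div (mt (hv.eq_missingPoint_iff s).2 hp)⟩

lemma isOpenEmbedding_affineChart (s : ℂ) : IsOpenEmbedding (affineChart s) := by
  refine .of_continuous_injective_isOpenMap (affineChart s).continuous (affineChart_injective s)
    (isOpenMap_iff_nhds_le.2 fun z W hW => ?_)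
  rw [Filter.mem_map] at hW
  obtain ⟨v, hv, hcoord⟩ := exists_local_isHomogeneousCoord (affineChart s z)
  have hden : Continuous fun q => (v q).2 - s * (v q).1 := by fun_prop
  have hne : (v (affineChart s z)).2 - s * (v (affineChart s z)).1 ≠ 0 :=
    mt (hcoord.self_of_nhds.eq_missingPoint_iff s).2 (affineChart_ne_missingPoint s z)
  let inverse : TwoSphere → ℂ := fun q => (v q).1 / ((v q).2 - s * (v q).1)
  have hinv : ContinuousAt inverse (affineChart s z) :=
    hv.fst.continuousAt.div hden.continuousAt hne
  have hz : inverse (affineChart s z) = z :=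
    affineChart_injective s (hcoord.self_of_nhds.affineChart_div hne)
  filter_upwards [hinv.preimage_mem_nhds (hz.symm ▸ hW), hden.continuousAt.eventually_ne hne,
    hcoord] with q hqW hq hqcoord
  exact hqcoord.affineChart_div hq ▸ hqW

lemma UnordConfigSpace.mk_mem_range_map {M N : Type} [TopologicalSpace M] [TopologicalSpace N]
    {k : ℕ} {e : C(M, N)} (he : Function.Injective e) {f : OrdConfigSpace N k} :
    mk f ∈ Set.range (map e he) ↔ ∀ i, f.1 i ∈ Set.range e := by
  constructor
  · rintro ⟨x, hx⟩ i
    obtain ⟨g, rfl⟩ := mk_surjective x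
    obtain ⟨τ, hτ⟩ := mk_eq_mk.1 hx
    exact ⟨g.1 (τ i), congrFun hτ i⟩
  · intro h
    have hf : f ∈ Set.range (OrdConfigSpace.map e he) := by
      rw [OrdConfigSpace.range_map]
      exact Set.mem_iInter.2 h
    obtain ⟨g, rfl⟩ := hf
    exact ⟨mk g, rfl⟩

/-- The chart of the configuration space of the sphere consisting of the configurations which do
not contain the point `[1 : s]`. -/
noncomputable def chartConfig (k : ℕ) (s : ℂ) :
    C(UnordConfigSpace ℂ k, UnordConfigSpace TwoSphere k) :=
  UnordConfigSpace.map (affineChart s) (affineChart_injective s)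

section ChartConfig

variable {k : ℕ}

lemma mk_mem_range_chartConfig {s : ℂ} {f : OrdConfigSpace TwoSphere k} :
    UnordConfigSpace.mk f ∈ Set.range (chartConfig k s) ↔ ∀ i, f.1 i ≠ missingPoint s := by
  rw [chartConfig, UnordConfigSpace.mk_mem_range_map, range_affineChart]
  rfl

lemma isOpenEmbedding_chartConfig (s : ℂ) : IsOpenEmbedding (chartConfig k s) :=
  UnordConfigSpace.isOpenEmbedding_map _ (isOpenEmbedding_affineChart s)

lemma continuous_chartConfig :
    Continuous fun p : ℂ × UnordConfigSpace ℂ k => chartConfig k p.1 p.2 := by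
  have hmk : IsOpenQuotientMap (UnordConfigSpace.mk (M := ℂ) (k := k)) :=
    ⟨UnordConfigSpace.mk_surjective, UnordConfigSpace.continuous_mk, UnordConfigSpace.isOpenMap_mk⟩
  refine (IsOpenQuotientMap.id.prodMap hmk).continuous_comp_iff.1 ?_
  have hmap : Continuous fun p : ℂ × OrdConfigSpace ℂ k =>
      p.2.map (affineChart p.1) (affineChart_injective p.1) := by
    refine continuous_induced_rng.2 (continuous_pi fun i => ?_)
    have hi : Continuous fun p : ℂ × OrdConfigSpace ℂ k => (p.1, p.2.1 i) :=
      continuous_fst.prodMk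
        ((continuous_apply i).comp (continuous_subtype_val.comp continuous_snd))
    exact Continuous.comp (g := fun q : ℂ × ℂ => affineChart q.1 q.2)
      (f := fun p : ℂ × OrdConfigSpace ℂ k => (p.1, p.2.1 i)) continuous_affineChart hi
  exact UnordConfigSpace.continuous_mk.comp hmap

lemma PathCocycle.map_chartConfig_comp_eq {A : Type*} [AddCommGroup A]
    (c : PathCocycle (UnordConfigSpace TwoSphere k) A) {γ : C(I, UnordConfigSpace ℂ k)}
    (hγ : γ 0 = γ 1) (s s' : ℂ) : c ((chartConfig k s).comp γ) = c ((chartConfig k s').comp γ) := by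
  let F : ((chartConfig k s).comp γ).Homotopy ((chartConfig k s').comp γ) :=
    { toFun p := chartConfig k (AffineMap.lineMap s s' (p.1 : ℂ)) (γ p.2)
      continuous_toFun := Continuous.comp
        (f := fun p : I × I => ((AffineMap.lineMap s s' (p.1 : ℂ) : ℂ), γ p.2))
        continuous_chartConfig (by simp only [AffineMap.lineMap_apply]; fun_prop)
      map_zero_left t := by simp
      map_one_left t := by simp }
  exact c.eq_of_freeHomotopy F fun r => congrArg (chartConfig k _) hγ

lemma exists_mem_range_chartConfig (x : UnordConfigSpace TwoSphere k) :
    ∃ s, x ∈ Set.range (chartConfig k s) := by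
  obtain ⟨f, rfl⟩ := UnordConfigSpace.mk_surjective x
  have hfin : (⋃ i, {s | f.1 i = missingPoint s}).Finite := Set.finite_iUnion fun i =>
    Set.Subsingleton.finite fun a ha b hb => missingPoint_injective (Eq.trans (Eq.symm ha) hb)
  obtain ⟨s, hs⟩ := hfin.infinite_compl.nonempty
  exact ⟨s, mk_mem_range_chartConfig.2 fun i h => hs (Set.mem_iUnion.2 ⟨i, h⟩)⟩

lemma nonempty_range_chartConfig_inter (s₁ s₂ s₃ : ℂ) : (Set.range (chartConfig k s₁) ∩
    Set.range (chartConfig k s₂) ∩ Set.range (chartConfig k s₃)).Nonempty := by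
  let e := (Set.toFinite ({s₁, s₂, s₃} : Set ℂ)).infinite_compl.natEmbedding
  let f : OrdConfigSpace TwoSphere k := ⟨fun i => missingPoint (e (i : ℕ)), fun i j hij =>
    Fin.ext (e.injective (Subtype.ext (missingPoint_injective hij)))⟩
  have mem {s : ℂ} (hs : s ∈ ({s₁, s₂, s₃} : Set ℂ)) :
      UnordConfigSpace.mk f ∈ Set.range (chartConfig k s) :=
    mk_mem_range_chartConfig.2 fun i h => (e i).2 (missingPoint_injective h ▸ hs)
  exact ⟨UnordConfigSpace.mk f, ⟨mem (by simp), mem (by simp)⟩, mem (by simp)⟩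

lemma exists_path_range_chartConfig_inter {s s' : ℂ} {x y : UnordConfigSpace TwoSphere k}
    (hx : x ∈ Set.range (chartConfig k s) ∩ Set.range (chartConfig k s'))
    (hy : y ∈ Set.range (chartConfig k s) ∩ Set.range (chartConfig k s')) :
    ∃ γ : C(I, UnordConfigSpace TwoSphere k), γ 0 = x ∧ γ 1 = y ∧
      ∀ t, γ t ∈ Set.range (chartConfig k s) ∩ Set.range (chartConfig k s') := by
  obtain ⟨⟨x, rfl⟩, hx⟩ := hx
  obtain ⟨⟨y, rfl⟩, hy⟩ := hy
  obtain ⟨f, rfl⟩ := UnordConfigSpace.mk_surjective x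
  obtain ⟨g, rfl⟩ := UnordConfigSpace.mk_surjective y
  have hB : {z | affineChart s z = missingPoint s'}.Subsingleton := fun a ha b hb =>
    affineChart_injective s (Eq.trans ha (Eq.symm hb))
  obtain ⟨γ, rfl, rfl, hγ⟩ := exists_path_ordConfigSpace_compl hB.finite.countable f g
    (mk_mem_range_chartConfig.1 hx) (mk_mem_range_chartConfig.1 hy)
  exact ⟨(chartConfig k s).comp ⟨fun t => UnordConfigSpace.mk (γ t),
    UnordConfigSpace.continuous_mk.comp γ.continuous⟩, rfl, rfl,
    fun t => ⟨⟨UnordConfigSpace.mk (γ t), rfl⟩, mk_mem_range_chartConfig.2 (hγ t)⟩⟩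

end ChartConfig

/-! ### The half-twist on the sphere -/

/-- The standard half-twist, viewed in the chart `z ↦ [z : 1]` of the sphere. -/
noncomputable def sphereHalfTwist (m : ℕ) : C(I, UnordConfigSpace TwoSphere (m + 2)) :=
  (chartConfig (m + 2) 0).comp (standardHalfTwist m)

lemma sphereHalfTwist_zero_eq_one (m : ℕ) : sphereHalfTwist m 0 = sphereHalfTwist m 1 :=
  congrArg (chartConfig (m + 2) 0) (standardHalfTwist_zero_eq_one m)

/-- Homogeneous coordinates of the points of the encircling loop, in which the coordinate at
infinity of the moving point has been replaced by `r`. At `r = 0` that point rests at infinity. -/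
noncomputable def encirclingCoord (m : ℕ) (r : ℝ) (t : I) (i : Fin (m + 2)) : ℂ × ℂ :=
  (encirclingTuple m t i, if i = 0 then (r : ℂ) else 1)

lemma encirclingCoord_ne_zero (m : ℕ) (r : ℝ) (t : I) (i : Fin (m + 2)) :
    encirclingCoord m r t i ≠ 0 := by
  intro h
  rcases eq_or_ne i 0 with rfl | hi
  · have hlt := (norm_nonneg _).trans_lt (norm_encirclingTuple_succ_lt m t 0)
    exact norm_pos_iff.1 hlt (congrArg Prod.fst h)
  · simpa [encirclingCoord, hi] using congrArg Prod.snd h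

lemma det₂_encirclingCoord_zero_succ_ne_zero {m : ℕ} (r t : I) (l : Fin (m + 1)) :
    det₂ (encirclingCoord m r t 0) (encirclingCoord m r t l.succ) ≠ 0 := by
  simp only [det₂, encirclingCoord, if_true, Fin.succ_ne_zero, if_false, mul_one]
  refine sub_ne_zero.2 fun h => (norm_encirclingTuple_succ_lt m t l).not_ge ?_
  rw [h, norm_mul, Complex.norm_real, Real.norm_of_nonneg r.2.1]
  exact mul_le_of_le_one_left (norm_nonneg _) r.2.2

lemma hopf_encirclingCoord_injective (m : ℕ) (r t : I) :
    Function.Injective fun i => hopf ⟨_, encirclingCoord_ne_zero m r t i⟩ := by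
  intro i j
  refine Fin.cases ?_ (fun i => ?_) i <;> refine Fin.cases ?_ (fun j => ?_) j
  · simp
  · exact fun h => absurd (hopf_eq_hopf_iff.1 h) (det₂_encirclingCoord_zero_succ_ne_zero r t j)
  · exact fun h => absurd (hopf_eq_hopf_iff.1 h.symm) (det₂_encirclingCoord_zero_succ_ne_zero r t i)
  · intro h
    have hdet := hopf_eq_hopf_iff.1 h
    simp only [det₂, encirclingCoord, Fin.succ_ne_zero, if_false, mul_one, one_mul] at hdet
    exact encirclingTuple_injective m t (sub_eq_zero.1 hdet)

/-- The homotopy moving the encircling point off to infinity. -/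
noncomputable def encirclingHomotopy (m : ℕ) : C(I × I, UnordConfigSpace TwoSphere (m + 2)) :=
  UnordConfigSpace.ofFamily (fun p i => hopf ⟨_, encirclingCoord_ne_zero m p.1 p.2 i⟩)
    (continuous_pi fun i => continuous_hopf.comp (Continuous.subtype_mk (by
      refine ((continuous_apply i).comp ((continuous_encirclingTuple m).comp
        continuous_snd)).prodMk ?_
      split_ifs <;> fun_prop) _))
    fun p => hopf_encirclingCoord_injective m p.1 p.2

lemma encirclingHomotopy_one (m : ℕ) (t : I) :
    encirclingHomotopy m (1, t) = chartConfig (m + 2) 0 (encirclingLoop m t) := by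
  refine congrArg UnordConfigSpace.mk (Subtype.ext (funext fun i => congrArg hopf (Subtype.ext ?_)))
  simp [encirclingCoord]

lemma encirclingHomotopy_zero (m : ℕ) (t : I) :
    encirclingHomotopy m (0, t) = encirclingHomotopy m (0, 0) := by
  refine congrArg UnordConfigSpace.mk (Subtype.ext (funext fun i => hopf_eq_hopf_iff.2 ?_))
  refine Fin.cases ?_ (fun l => ?_) i
  · simp [det₂, encirclingCoord]
  · simp [det₂, encirclingCoord, encirclingTuple_succ]

namespace PathCocycle

variable {A : Type*} [AddCommGroup A] {m : ℕ}
  (c : PathCocycle (UnordConfigSpace TwoSphere (m + 2)) A)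

lemma map_chartConfig_comp_encirclingLoop :
    c ((chartConfig (m + 2) 0).comp (encirclingLoop m)) = 0 := by
  let F : (ContinuousMap.const I (encirclingHomotopy m (0, 0))).Homotopy
      ((chartConfig (m + 2) 0).comp (encirclingLoop m)) :=
    { toContinuousMap := encirclingHomotopy m
      map_zero_left := encirclingHomotopy_zero m
      map_one_left := encirclingHomotopy_one m }
  rw [← c.eq_of_freeHomotopy F, c.map_const]
  intro r
  refine congrArg UnordConfigSpace.mk (Subtype.ext (funext fun i => congrArg hopf (Subtype.ext ?_)))
  simp only [encirclingCoord, encirclingTuple_zero_eq_one]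

theorem smul_map_sphereHalfTwist : (2 * m + 2) • c (sphereHalfTwist m) = 0 :=
  (map_encirclingLoop (c.comap (chartConfig (m + 2) 0))).symm.trans
    c.map_chartConfig_comp_encirclingLoop

lemma exists_potential_range_chartConfig (hc : c (sphereHalfTwist m) = 0) (s : ℂ) :
    ∃ f, c.IsPotentialOn (Set.range (chartConfig (m + 2) s)) f := by
  refine c.exists_potential_range_of_isEmbedding (isOpenEmbedding_chartConfig s).isEmbedding ?_
  refine exists_potential_of_vanishesOnHalfTwists fun w i j hij ρ h => ?_
  rw [halfTwist_eq_halfTwist _ hij zero_ne_one h (isTwistRadius_lineConfig m), ← hc]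
  exact c.map_chartConfig_comp_eq (standardHalfTwist_zero_eq_one m) s 0

theorem exists_potential_of_map_sphereHalfTwist_eq_zero (hc : c (sphereHalfTwist m) = 0) :
    ∃ f, c.IsPotentialOn Set.univ f := by
  choose f hf using c.exists_potential_range_chartConfig hc
  refine c.exists_potential_of_openCover (fun s => (isOpenEmbedding_chartConfig s).isOpen_range)
    exists_mem_range_chartConfig hf (fun s s' x hx y hy => ?_) nonempty_range_chartConfig_inter
  obtain ⟨γ, rfl, rfl, hγ⟩ := exists_path_range_chartConfig_inter hx hy
  have increment := (hf s γ fun t => (hγ t).1).symm.trans (hf s' γ fun t => (hγ t).2)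
  exact (sub_eq_sub_iff_sub_eq_sub.1 increment).symm

end PathCocycle

/-! ### Binary forms up to roots of unity -/

section RootsOfUnity

variable {V : Type*} [AddCommGroup V] [Module ℂ V] [TopologicalSpace V] [T2Space V]
  [LocallyCompactSpace V] [ContinuousConstSMul ℂ V] {n : ℕ} [NeZero n]

lemma isQuotientCoveringMap_mk_orbitRel_rootsOfUnity :
    IsQuotientCoveringMap (Quotient.mk (MulAction.orbitRel (rootsOfUnity n ℂ) {v : V // v ≠ 0}))
      (rootsOfUnity n ℂ) := by
  have : LocallyCompactSpace {v : V // v ≠ 0} :=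
    (isOpen_ne : IsOpen {v : V | v ≠ 0}).locallyCompactSpace
  have : ContinuousConstSMul (rootsOfUnity n ℂ) {v : V // v ≠ 0} :=
    ⟨fun u => (continuous_subtype_val.const_smul ((u : ℂˣ) : ℂ)).subtype_mk _⟩
  have : IsCancelSMul (rootsOfUnity n ℂ) {v : V // v ≠ 0} :=
    ⟨fun _ _ v h => Subtype.ext (Units.ext (smul_left_injective ℂ v.2 (congrArg Subtype.val h)))⟩
  exact isQuotientCoveringMap_quotientMk_of_properlyDiscontinuousSMul

lemma exists_rootsOfUnity_mul_eq {c c' D : ℂ} (h : c ^ n * D = 1) (h' : c' ^ n * D = 1) :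
    ∃ u : rootsOfUnity n ℂ, ((u : ℂˣ) : ℂ) * c = c' := by
  have hc : c ≠ 0 := by
    rintro rfl
    simp [NeZero.ne n] at h
  have hpow : (c' / c) ^ n = 1 := by
    rw [div_pow, div_eq_one_iff_eq (pow_ne_zero n hc)]
    exact mul_right_cancel₀ (right_ne_zero_of_mul_eq_one h) (h'.trans h.symm)
  exact ⟨rootsOfUnity.mkOfPowEq _ hpow, div_mul_cancel₀ c' hc⟩

end RootsOfUnity

lemma exists_pow_mul_eq_one {n : ℕ} (hn : n ≠ 0) {D : ℂ} (hD : D ≠ 0) : ∃ c, c ^ n * D = 1 :=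
  ⟨(D⁻¹) ^ (n⁻¹ : ℂ), by rw [Complex.cpow_nat_inv_pow _ hn, inv_mul_cancel₀ hD]⟩

lemma exists_nhds_continuousOn_pow_mul_eq_one {T : Type*} [TopologicalSpace T] {D : T → ℂ}
    (hD : Continuous D) {t₀ : T} (h₀ : D t₀ ≠ 0) {n : ℕ} (hn : n ≠ 0) :
    ∃ N ∈ 𝓝 t₀, ∃ c : T → ℂ, ContinuousOn c N ∧ ∀ t ∈ N, c t ^ n * D t = 1 := by
  obtain ⟨c₀, hc₀⟩ := exists_pow_mul_eq_one hn h₀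
  have hslit : ∀ᶠ t in 𝓝 t₀, D t₀ / D t ∈ Complex.slitPlane := by
    refine (continuousAt_const.div hD.continuousAt h₀).preimage_mem_nhds
      (Complex.isOpen_slitPlane.mem_nhds ?_)
    rw [Pi.div_apply, div_self h₀]
    exact Complex.one_mem_slitPlane
  have hne {t : T} (ht : D t₀ / D t ∈ Complex.slitPlane) : D t ≠ 0 := fun h =>
    Complex.slitPlane_ne_zero ht (by rw [h, div_zero])
  refine ⟨_, hslit, fun t => c₀ * (D t₀ / D t) ^ (n⁻¹ : ℂ), ?_, fun t ht => ?_⟩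
  · exact continuousOn_const.mul
      ((continuousOn_const.div hD.continuousOn fun t ht => hne ht).cpow_const fun t ht => ht)
  · rw [mul_pow, Complex.cpow_nat_inv_pow _ hn, mul_assoc, div_mul_cancel₀ _ (hne ht), hc₀]

lemma det₂_smul_smul (a b : ℂ) (v w : ℂ × ℂ) : det₂ (a • v) (b • w) = a * b * det₂ v w := by
  simp only [det₂, Prod.smul_fst, Prod.smul_snd, smul_eq_mul]
  ring

section FormValues

variable {k : ℕ}

/-- The values at `(1, 0), …, (1, k)` of the binary form `c * ∏ i, det₂ (v i) ·` of degree `k`,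
which vanishes at the points with homogeneous coordinates `v i`. They determine the form. -/
noncomputable def formValues (v : Fin k → ℂ × ℂ) (c : ℂ) : Fin (k + 1) → ℂ :=
  fun j => c * ∏ i, det₂ (v i) (1, (j : ℕ))

lemma formValues_mul (v : Fin k → ℂ × ℂ) (a c : ℂ) :
    formValues v (a * c) = a • formValues v c :=
  funext fun _ => mul_assoc _ _ _

lemma formValues_smul_perm (v : Fin k → ℂ × ℂ) (a : Fin k → ℂ) (τ : Equiv.Perm (Fin k)) (c : ℂ) :
    formValues (fun i => a i • v (τ i)) c = formValues v (c * ∏ i, a i) := by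
  funext j
  have hdet (i : Fin k) :
      det₂ (a i • v (τ i)) (1, (j : ℕ)) = a i * det₂ (v (τ i)) (1, (j : ℕ)) := by
    simpa using det₂_smul_smul (a i) 1 (v (τ i)) (1, (j : ℕ))
  simp only [formValues, hdet, Finset.prod_mul_distrib, mul_assoc]
  rw [Equiv.prod_comp τ fun i => det₂ (v i) (1, (j : ℕ))]

lemma eq_zero_of_det₂_eq_zero {v : ℂ × ℂ} {a b : ℂ} (hab : a ≠ b) (ha : det₂ v (1, a) = 0)
    (hb : det₂ v (1, b) = 0) : v = 0 := by
  simp only [det₂, mul_one] at ha hb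
  have hfst : v.1 = 0 := by
    refine (mul_eq_zero.1 ?_).resolve_right (sub_ne_zero.2 hab)
    linear_combination ha - hb
  exact Prod.ext hfst (by simpa [hfst] using ha)

-- A form of degree `k` with `k + 1` distinct zeros has a vanishing factor.
lemma formValues_ne_zero {v : Fin k → ℂ × ℂ} (hv : ∀ i, v i ≠ 0) {c : ℂ} (hc : c ≠ 0) :
    formValues v c ≠ 0 := by
  intro h
  have hzero (j : Fin (k + 1)) : ∃ i, det₂ (v i) (1, (j : ℕ)) = 0 := by
    obtain ⟨i, -, hi⟩ := Finset.prod_eq_zero_iff.1 ((mul_eq_zero.1 (congrFun h j)).resolve_left hc)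
    exact ⟨i, hi⟩
  choose g hg using hzero
  obtain ⟨j, j', hjj', heq⟩ := Fintype.exists_ne_map_eq_of_card_lt g (by simp)
  have hne : ((j : ℕ) : ℂ) ≠ (j' : ℕ) := fun h => hjj' (Fin.ext (Nat.cast_injective h))
  exact hv (g j) (eq_zero_of_det₂_eq_zero hne (hg j) (heq ▸ hg j'))

lemma continuousOn_formValues {T : Type*} [TopologicalSpace T] {v : T → Fin k → ℂ × ℂ} {c : T → ℂ}
    {s : Set T} (hv : Continuous v) (hc : ContinuousOn c s) :
    ContinuousOn (fun t => formValues (v t) (c t)) s := by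
  unfold formValues det₂
  fun_prop

end FormValues

/-! ### Normalization by the discriminant -/

section NormalizedLift

variable {m : ℕ} {f g : OrdConfigSpace TwoSphere (m + 2)} {v w : Fin (m + 2) → ℂ × ℂ} {b c : ℂ}

/-- The vectors `v` are homogeneous coordinates of the points of `f`, and the binary form
`c * ∏ i, det₂ (v i) ·` has discriminant `1` up to sign. -/
structure IsNormalizedLift (f : OrdConfigSpace TwoSphere (m + 2)) (v : Fin (m + 2) → ℂ × ℂ)
    (c : ℂ) : Prop where
  isHomogeneousCoord (i : Fin (m + 2)) : IsHomogeneousCoord (v i) (f.1 i)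
  pow_mul_offDiagProd : c ^ (2 * m + 2) * offDiagProd (fun x y => det₂ (v x) (v y)) = 1

/-- Nonzero vectors of values of binary forms of degree `m + 2`, up to the scalars which preserve
the discriminant. -/
abbrev FormClass (m : ℕ) : Type :=
  Quotient (MulAction.orbitRel (rootsOfUnity (2 * m + 2) ℂ) {F : Fin (m + 3) → ℂ // F ≠ 0})

lemma offDiagProd_det₂_ne_zero (h : ∀ i, IsHomogeneousCoord (v i) (f.1 i)) :
    offDiagProd (fun x y => det₂ (v x) (v y)) ≠ 0 :=
  offDiagProd_ne_zero fun x y hxy hdet => hxy (f.2 (((h x).eq_iff (h y)).2 hdet))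

lemma offDiagProd_det₂_smul_perm (v : Fin (m + 2) → ℂ × ℂ) (a : Fin (m + 2) → ℂ)
    (τ : Equiv.Perm (Fin (m + 2))) :
    offDiagProd (fun x y => det₂ (a x • v (τ x)) (a y • v (τ y))) =
      (∏ i, a i) ^ (2 * m + 2) * offDiagProd fun x y => det₂ (v x) (v y) := by
  simp only [det₂_smul_smul]
  rw [offDiagProd_mul_mul a fun x y => det₂ (v (τ x)) (v (τ y)),
    offDiagProd_perm (fun x y => det₂ (v x) (v y)) τ, Fintype.card_fin]
  rfl

lemma exists_isNormalizedLift (f : OrdConfigSpace TwoSphere (m + 2)) :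
    ∃ v c, IsNormalizedLift f v c := by
  choose v hv using fun i => exists_isHomogeneousCoord (f.1 i)
  obtain ⟨c, hc⟩ := exists_pow_mul_eq_one (2 * m + 1).succ_ne_zero (offDiagProd_det₂_ne_zero hv)
  exact ⟨v, c, hv, hc⟩

lemma exists_nhds_isNormalizedLift (f₀ : OrdConfigSpace TwoSphere (m + 2)) :
    ∃ N ∈ 𝓝 f₀, ∃ v c, Continuous v ∧ ContinuousOn c N ∧
      ∀ f ∈ N, IsNormalizedLift f (v f) (c f) := by
  choose v hv hcoord using fun i => exists_local_isHomogeneousCoord (f₀.1 i)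
  have heval (i : Fin (m + 2)) : Continuous fun f : OrdConfigSpace TwoSphere (m + 2) => f.1 i :=
    (continuous_apply i).comp continuous_subtype_val
  let w : OrdConfigSpace TwoSphere (m + 2) → Fin (m + 2) → ℂ × ℂ := fun f i => v i (f.1 i)
  have hw : Continuous w := continuous_pi fun i => (hv i).comp (heval i)
  have hdisc : Continuous fun f => offDiagProd fun x y => det₂ (w f x) (w f y) :=
    continuous_offDiagProd fun x y => by unfold det₂; fun_prop
  have hlocal : ∀ᶠ f in 𝓝 f₀, ∀ i, IsHomogeneousCoord (w f i) (f.1 i) :=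
    Filter.eventually_all.2 fun i => (heval i).continuousAt.eventually (hcoord i)
  obtain ⟨N, hN, c, hc, hpow⟩ := exists_nhds_continuousOn_pow_mul_eq_one hdisc
    (offDiagProd_det₂_ne_zero hlocal.self_of_nhds) (2 * m + 1).succ_ne_zero
  exact ⟨_, Filter.inter_mem hN hlocal, w, c, hw, hc.mono Set.inter_subset_left,
    fun f hf => ⟨hf.2, hpow f hf.1⟩⟩

namespace IsNormalizedLift

/-- The nonzero vector of values of the binary form defined by a normalized lift. -/
noncomputable def toVector (h : IsNormalizedLift f v c) : {F : Fin (m + 3) → ℂ // F ≠ 0} :=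
  ⟨formValues v c, formValues_ne_zero (fun i => (h.isHomogeneousCoord i).1) <| by
    rintro rfl
    simpa using h.pow_mul_offDiagProd⟩

/-- The class of the binary form defined by a normalized lift. -/
noncomputable def formClass (h : IsNormalizedLift f v c) : FormClass m :=
  Quotient.mk _ h.toVector

lemma formClass_eq (h : IsNormalizedLift f v b) (h' : IsNormalizedLift g w c)
    (hfg : UnordConfigSpace.mk f = UnordConfigSpace.mk g) : h.formClass = h'.formClass := by
  obtain ⟨τ, hτ⟩ := UnordConfigSpace.mk_eq_mk.1 hfg
  have hsmul (i : Fin (m + 2)) : ∃ a : ℂ, w i = a • v (τ i) := by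
    have hv := h.isHomogeneousCoord (τ i)
    exact exists_eq_smul_of_det₂_eq_zero hv.1
      ((hv.eq_iff (h'.isHomogeneousCoord i)).1 (congrFun hτ i))
  choose a ha using hsmul
  obtain rfl : w = fun i => a i • v (τ i) := funext ha
  have hpow := h'.pow_mul_offDiagProd
  rw [offDiagProd_det₂_smul_perm, ← mul_assoc, ← mul_pow] at hpow
  obtain ⟨u, hu⟩ := exists_rootsOfUnity_mul_eq h.pow_mul_offDiagProd hpow
  have hvector : u • h.toVector = h'.toVector := by
    refine Subtype.ext ?_
    change ((u : ℂˣ) : ℂ) • formValues v b = formValues (fun i => a i • v (τ i)) c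
    rw [formValues_smul_perm, ← hu, formValues_mul]
  exact (Quotient.sound (s := MulAction.orbitRel _ _) ⟨u, hvector⟩).symm

end IsNormalizedLift

/-- The normalized binary form with given zeros, up to a root of unity. -/
noncomputable def normalizedForm : UnordConfigSpace TwoSphere (m + 2) → FormClass m :=
  Quotient.lift (fun f => (exists_isNormalizedLift f).choose_spec.choose_spec.formClass)
    fun _ _ h => IsNormalizedLift.formClass_eq _ _ (Quotient.sound h)

lemma IsNormalizedLift.normalizedForm_mk (h : IsNormalizedLift f v c) :
    normalizedForm (UnordConfigSpace.mk f) = h.formClass :=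
  formClass_eq _ _ rfl

lemma continuous_normalizedForm : Continuous (normalizedForm (m := m)) := by
  have hmk : IsOpenQuotientMap (UnordConfigSpace.mk (M := TwoSphere) (k := m + 2)) :=
    ⟨UnordConfigSpace.mk_surjective, UnordConfigSpace.continuous_mk, UnordConfigSpace.isOpenMap_mk⟩
  refine hmk.continuous_comp_iff.1 (continuous_iff_continuousAt.2 fun f₀ => ?_)
  obtain ⟨N, hN, v, c, hv, hc, hlift⟩ := exists_nhds_isNormalizedLift f₀
  refine ContinuousOn.continuousAt ?_ hN
  rw [continuousOn_iff_continuous_domRestrict]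
  have hvector : Continuous fun f : N => (hlift f.1 f.2).toVector :=
    (continuousOn_iff_continuous_domRestrict.1 (continuousOn_formValues hv hc)).subtype_mk _
  refine (continuous_quotient_mk'.comp hvector).congr fun f => ?_
  exact ((hlift f.1 f.2).normalizedForm_mk).symm

end NormalizedLift

/-! ### The monodromy of the half-twist -/

lemma isNormalizedLift_map_affineChart {m : ℕ} {z : Fin (m + 2) → ℂ} (hz : Function.Injective z)
    {c : ℂ} (hc : c ^ (2 * m + 2) * tupleDiscr z = 1) :
    IsNormalizedLift (OrdConfigSpace.map (affineChart 0) (affineChart_injective 0) ⟨z, hz⟩)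
      (fun i => (z i, 1)) c where
  isHomogeneousCoord i := by
    have h := isHomogeneousCoord_affineChart 0 (z i)
    rwa [zero_mul, zero_add] at h
  pow_mul_offDiagProd := by
    simp only [det₂, mul_one, one_mul]
    exact hc

lemma standardHalfTwistTuple_injective (m : ℕ) (t : I) :
    Function.Injective (standardHalfTwistTuple m t) :=
  ((isTwistRadius_lineConfig m).mul_exp _).pairAround_injective zero_ne_one (lineConfig m).2

lemma continuous_standardHalfTwistTuple (m : ℕ) : Continuous (standardHalfTwistTuple m) :=
  continuous_pairAround continuous_const (halfTurn 1).continuous 0 1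

lemma standardHalfTwistTuple_one_eq_comp_swap (m : ℕ) :
    standardHalfTwistTuple m 1 = standardHalfTwistTuple m 0 ∘ Equiv.swap 0 1 := by
  rw [standardHalfTwistTuple, standardHalfTwistTuple, pairAround_comp_swap zero_ne_one,
    halfTurn_zero, halfTurn_one]

lemma HasWinding.exists_pow_mul_eq_one {f : I → ℂ} {w : ℤ} (hf : HasWinding f w) {n : ℕ}
    (hn : n ≠ 0) : ∃ c : C(I, ℂ), (∀ t, c t ^ n * f t = 1) ∧
      c 1 = (Complex.exp (2 * Real.pi * Complex.I / n))⁻¹ ^ w * c 0 := by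
  obtain ⟨ℓ, hℓ, hw⟩ := hf
  refine ⟨⟨fun t => Complex.exp (-ℓ t / n), by fun_prop⟩, fun t => ?_, ?_⟩
  · rw [hℓ, ContinuousMap.coe_mk, ← Complex.exp_nat_mul, mul_div_cancel₀ _ (Nat.cast_ne_zero.2 hn),
      ← Complex.exp_add, neg_add_cancel, Complex.exp_zero]
  · simp only [ContinuousMap.coe_mk, hw, ← Complex.exp_neg, ← Complex.exp_int_mul,
      ← Complex.exp_add]
    ring_nf

lemma exists_lift_normalizedForm_comp_sphereHalfTwist (m : ℕ) :
    ∃ (Γ : C(I, {F : Fin (m + 3) → ℂ // F ≠ 0})) (u : rootsOfUnity (2 * m + 2) ℂ),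
      (∀ t, normalizedForm (sphereHalfTwist m t) = Quotient.mk _ (Γ t)) ∧ Γ 1 = u • Γ 0 ∧
        orderOf u = 2 * m + 2 := by
  have hn := (2 * m + 1).succ_ne_zero
  obtain ⟨c, hpow, hc⟩ := (hasWinding_tupleDiscr_standardHalfTwistTuple m).exists_pow_mul_eq_one hn
  let v : I → Fin (m + 2) → ℂ × ℂ := fun t i => (standardHalfTwistTuple m t i, 1)
  have hv : Continuous v := continuous_pi fun i =>
    ((continuous_apply i).comp (continuous_standardHalfTwistTuple m)).prodMk continuous_const
  have hlift (t : I) :=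
    isNormalizedLift_map_affineChart (standardHalfTwistTuple_injective m t) (hpow t)
  have hΓ : Continuous fun t => (hlift t).toVector :=
    (continuousOn_univ.1 (continuousOn_formValues hv c.continuous.continuousOn)).subtype_mk _
  have hζ := (Complex.isPrimitiveRoot_exp (2 * m + 2) hn).inv
  refine ⟨⟨_, hΓ⟩, hζ.toRootsOfUnity, fun t => (hlift t).normalizedForm_mk, Subtype.ext ?_, ?_⟩
  · have hswap : v 1 = fun i => (1 : ℂ) • v 0 (Equiv.swap 0 1 i) := by
      simp [v, standardHalfTwistTuple_one_eq_comp_swap]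
    change formValues (v 1) (c 1) = _ • formValues (v 0) (c 0)
    rw [hswap, formValues_smul_perm, Finset.prod_const_one, mul_one, hc, zpow_one,
      formValues_mul]
    rfl
  · rw [← Subgroup.orderOf_coe, ← orderOf_units]
    exact hζ.eq_orderOf.symm

theorem exists_pathCocycle_addOrderOf_sphereHalfTwist (m : ℕ) :
    ∃ ψ : PathCocycle (UnordConfigSpace TwoSphere (m + 2)) (Additive (rootsOfUnity (2 * m + 2) ℂ)),
      addOrderOf (ψ (sphereHalfTwist m)) = 2 * m + 2 := by
  let p : C({F : Fin (m + 3) → ℂ // F ≠ 0}, FormClass m) := ⟨Quotient.mk _, continuous_quotient_mk'⟩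
  obtain ⟨c, hc⟩ := exists_pathCocycle_of_isAddQuotientCoveringMap (p := p)
    (isQuotientCoveringMap_mk_orbitRel_rootsOfUnity).toAdditive
  obtain ⟨Γ, u, hlift, hu, horder⟩ := exists_lift_normalizedForm_comp_sphereHalfTwist m
  let form : C(UnordConfigSpace TwoSphere (m + 2), FormClass m) := ⟨_, continuous_normalizedForm⟩
  have hcomp : form.comp (sphereHalfTwist m) = p.comp Γ := ContinuousMap.ext hlift
  have hval : c (form.comp (sphereHalfTwist m)) = .ofMul u := hcomp ▸ hc Γ (.ofMul u) hu
  refine ⟨c.comap form, ?_⟩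
  exact (congrArg addOrderOf hval).trans ((addOrderOf_ofMul_eq_orderOf u).trans horder)

/-- **Napolitano.** For every `k ≥ 2`, the first integral homology group of the unordered
configuration space of `k` points in the 2-sphere is cyclic of order `2k - 2`:
`H_1(C_k(S²); ℤ) ≅ ℤ/(2k-2)ℤ`. -/
theorem first_homology_of_configuration_spaces_of_two_sphere (k : ℕ) (hk : 2 ≤ k) :
    Nonempty
      ((SingularHomology ℤ 1
          (UnordConfigSpace ↥(Metric.sphere (0 : EuclideanSpace ℝ (Fin 3)) 1) k)) ≃ₗ[ℤ]
        ZMod (2 * k - 2)) := by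
  obtain ⟨m, rfl⟩ := Nat.exists_eq_add_of_le' hk
  have order : 2 * (m + 2) - 2 = 2 * m + 2 := by lia
  rw [order]
  obtain ⟨ψ, hψ⟩ := exists_pathCocycle_addOrderOf_sphereHalfTwist m
  exact nonempty_singularHomology_one_linearEquiv_zmod (sphereHalfTwist_zero_eq_one m)
    (fun _ _ c => c.smul_map_sphereHalfTwist)
    (fun _ _ c => c.exists_potential_of_map_sphereHalfTwist_eq_zero) hψ
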